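/- arXiv:2106.05811 — 2 statements merged into one kernel-verified Lean document; each statement's English description precedes it below -/
import Mathlib

section
/- Let κ̃ > 0, λ ≥ 0, A ≥ 0, and c ∈ ℝ. Then there exist R > C_B/κ̃ and y ∈ C^∞_loc((0, ∞); ℝ) such that r y''(r) + A y'(r) + κ̃² r sinh y(r) = r λ for all r ∈ (0, ∞), lim_{r→0⁺} y(r) = c, lim_{r→0⁺} y'(r) = 0, and y(R) = arcsinh(λ/κ̃²). -/
open MeasureTheory Set Filter
open scoped ENNReal NNReal Topology BigOperators

noncomputable section

/-- Euclidean space ℝ^d. -/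
abbrev Euc (d : ℕ) := EuclideanSpace ℝ (Fin d)

/-- Smooth compactly supported test functions supported inside Ω. -/
def IsTestFun {d : ℕ} (Ω : Set (Euc d)) (φ : Euc d → ℂ) : Prop :=
  ContDiff ℝ (⊤ : ℕ∞) φ ∧ HasCompactSupport φ ∧ tsupport φ ⊆ Ω

/-- The i-th partial derivative of a (differentiable) function. -/
def pd {d : ℕ} (i : Fin d) (φ : Euc d → ℂ) (x : Euc d) : ℂ :=
  fderiv ℝ φ x (EuclideanSpace.single i (1 : ℝ))

/-- `v` is the i-th weak partial derivative of `u` on Ω. -/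
def IsWeakDeriv {d : ℕ} (Ω : Set (Euc d)) (i : Fin d) (u v : Euc d → ℂ) : Prop :=
  ∀ φ : Euc d → ℂ, IsTestFun Ω φ →
    ∫ x in Ω, u x * pd i φ x = - ∫ x in Ω, v x * φ x

/-- Membership in L²(Ω). -/
def MemL2 {d : ℕ} (Ω : Set (Euc d)) (u : Euc d → ℂ) : Prop :=
  MemLp u 2 (volume.restrict Ω)

/-- The L²(Ω) norm. -/
def L2N {d : ℕ} (Ω : Set (Euc d)) (u : Euc d → ℂ) : ℝ :=
  (eLpNorm u 2 (volume.restrict Ω)).toReal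

/-- The L^∞(Ω) norm. -/
def LinfN {d : ℕ} (Ω : Set (Euc d)) (u : Euc d → ℂ) : ℝ :=
  (eLpNorm u ⊤ (volume.restrict Ω)).toReal

/-- A bundled Sobolev function of integer order k on Ω : the function together with
all of its iterated weak partial derivatives up to order k, all belonging to L²(Ω).
`D j v` is the iterated weak derivative ∂_{v 0} ∂_{v 1} ⋯ ∂_{v (j-1)} u. -/
structure SobFun (d : ℕ) (Ω : Set (Euc d)) (k : ℕ) where
  D : (j : ℕ) → (Fin j → Fin d) → Euc d → ℂ
  mem : ∀ j, j ≤ k → ∀ v : Fin j → Fin d, MemL2 Ω (D j v)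
  weak : ∀ j, j < k → ∀ v : Fin j → Fin d, ∀ i : Fin d,
    IsWeakDeriv Ω i (D j v) (D (j+1) (Fin.cons i v))

/-- The underlying function of a bundled Sobolev function. -/
def SobFun.u {d : ℕ} {Ω : Set (Euc d)} {k : ℕ} (U : SobFun d Ω k) : Euc d → ℂ :=
  U.D 0 (fun i => i.elim0)

/-- First-order weak partial derivatives of a bundled Sobolev function. -/
def SobFun.d1 {d : ℕ} {Ω : Set (Euc d)} {k : ℕ} (U : SobFun d Ω k) (i : Fin d) :
    Euc d → ℂ :=
  U.D 1 (fun _ => i)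

/-- Forgetting the top-order derivatives of a bundled Sobolev function. -/
def SobFun.lower {d : ℕ} {Ω : Set (Euc d)} {k : ℕ} (U : SobFun d Ω (k+1)) :
    SobFun d Ω k :=
  ⟨U.D, fun j hj v => U.mem j (Nat.le_succ_of_le hj) v,
    fun j hj v i => U.weak j (Nat.lt_succ_of_lt hj) v i⟩

/-- Squared Gagliardo seminorm, as an extended nonnegative real. -/
def gagliardoE {d : ℕ} (Ω : Set (Euc d)) (s' : ℝ) (v : Euc d → ℂ) : ℝ≥0∞ :=
  ∫⁻ x in Ω, ∫⁻ y in Ω,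
    ((‖v x - v y‖₊ : ℝ≥0∞) ^ (2 : ℕ)) / ((‖x - y‖₊ : ℝ≥0∞) ^ ((d : ℝ) + 2 * s'))

/-- Gagliardo seminorm with differentiability parameter s' ∈ (0,1). -/
def gagliardo {d : ℕ} (Ω : Set (Euc d)) (s' : ℝ) (v : Euc d → ℂ) : ℝ :=
  ((gagliardoE Ω s' v) ^ ((1 : ℝ)/2)).toReal

/-- Integer-order Sobolev norm ‖·‖_{H^k(Ω)}. -/
def SobNormInt {d : ℕ} {Ω : Set (Euc d)} {k : ℕ} (U : SobFun d Ω k) : ℝ :=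
  Real.sqrt (∑ j ∈ Finset.range (k+1), ∑ v : Fin j → Fin d, (L2N Ω (U.D j v))^2)

/-- Sobolev norm ‖·‖_{H^s(Ω)} for k ≤ s < k+1 : the integer part plus, when s > k,
the Gagliardo seminorms of the top-order derivatives. -/
def SobNormS {d : ℕ} {Ω : Set (Euc d)} {k : ℕ} (s : ℝ) (U : SobFun d Ω k) : ℝ :=
  Real.sqrt ((∑ j ∈ Finset.range (k+1), ∑ v : Fin j → Fin d, (L2N Ω (U.D j v))^2)
    + if (k : ℝ) < s then
        ∑ v : Fin k → Fin d, (gagliardo Ω (s - k) (U.D k v))^2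
      else 0)

/-- Finiteness of the fractional part of the H^s norm (membership in H^s). -/
def SobFinS {d : ℕ} {Ω : Set (Euc d)} {k : ℕ} (s : ℝ) (U : SobFun d Ω k) : Prop :=
  (k : ℝ) < s → ∀ v : Fin k → Fin d, gagliardoE Ω (s - k) (U.D k v) < ⊤

/-- H^s distance between two bundled Sobolev functions, k ≤ s < k+1. -/
def SobDistS {d : ℕ} {Ω : Set (Euc d)} {k : ℕ} (s : ℝ) (U V : SobFun d Ω k) : ℝ :=
  Real.sqrt ((∑ j ∈ Finset.range (k+1), ∑ v : Fin j → Fin d,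
      (L2N Ω (fun x => U.D j v x - V.D j v x))^2)
    + if (k : ℝ) < s then
        ∑ v : Fin k → Fin d, (gagliardo Ω (s - k) (fun x => U.D k v x - V.D k v x))^2
      else 0)

/-- Membership in H¹₀(Ω) : the extension by zero belongs to H¹(ℝ^d). -/
def MemH10 {d : ℕ} (Ω : Set (Euc d)) (u : Euc d → ℂ) : Prop :=
  MemL2 univ (Ω.indicator u) ∧
  ∀ i : Fin d, ∃ v : Euc d → ℂ, MemL2 univ v ∧ IsWeakDeriv univ i (Ω.indicator u) v

/-- The principal Dirichlet eigenvalue of -Δ on Ω, via the Rayleigh variational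
characterization (infimum over smooth compactly supported test functions). -/
def lambda1 {d : ℕ} (Ω : Set (Euc d)) : ℝ :=
  sInf { r : ℝ | ∃ φ : Euc d → ℂ, IsTestFun Ω φ ∧ φ ≠ 0 ∧
    r = (∫ x, ‖fderiv ℝ φ x‖^2) / (∫ x, ‖φ x‖^2) }

/-- Ω has a smooth boundary: it is a sublevel set of a smooth function whose
gradient does not vanish on the boundary. -/
def HasSmoothBoundary {d : ℕ} (Ω : Set (Euc d)) : Prop :=
  ∃ f : Euc d → ℝ, ContDiff ℝ (⊤ : ℕ∞) f ∧ Ω = {x | f x < 0} ∧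
    ∀ x ∈ frontier Ω, fderiv ℝ f x ≠ 0

/-- Uniform ellipticity: Re ∑ ε^{ij}(x) ξ_i conj(ξ_j) ≥ θ |ξ|² for a.e. x ∈ Ω. -/
def UniformlyElliptic {d : ℕ} (Ω : Set (Euc d))
    (ε : Euc d → Matrix (Fin d) (Fin d) ℂ) (θ : ℝ) : Prop :=
  ∀ᵐ x ∂(volume.restrict Ω), ∀ ξ : Fin d → ℂ,
    θ * ∑ i, ‖ξ i‖^2 ≤ (∑ i, ∑ j, ε x i j * ξ i * (starRingEnd ℂ) (ξ j)).re

/-- ε ∈ W^{1,∞}(Ω; ℂ^{d×d}) : every entry is bounded and Lipschitz on Ω. -/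
def EpsW1inf {d : ℕ} (Ω : Set (Euc d)) (ε : Euc d → Matrix (Fin d) (Fin d) ℂ) : Prop :=
  ∃ K : ℝ≥0, ∀ i j, LipschitzOnWith K (fun x => ε x i j) Ω ∧ ∀ x ∈ Ω, ‖ε x i j‖ ≤ (K : ℝ)

/-- `Lu` is a representative of  L u = -∇·(ε ∇u) + κ² u  for the H²-function U:
there are weak divergence data g i = ∂_i (∑_j ε^{ij} ∂_j u)  with
Lu = -∑ g i + κ² u  a.e. on Ω. -/
def IsLu {d : ℕ} (Ω : Set (Euc d)) (ε : Euc d → Matrix (Fin d) (Fin d) ℂ)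
    (κ2 : Euc d → ℂ) (U : SobFun d Ω 2) (Lu : Euc d → ℂ) : Prop :=
  ∃ g : Fin d → Euc d → ℂ,
    (∀ i, IsWeakDeriv Ω i (fun x => ∑ j, ε x i j * U.d1 j x) (g i)) ∧
    ∀ᵐ x ∂(volume.restrict Ω), Lu x = -(∑ i, g i x) + κ2 x * U.u x

/-- U ∈ H²(Ω) is a strong solution of the nPBE
  -∇·(ε ∇u) + κ² sinh u = f in Ω,  u = g on ∂Ω,
where the boundary datum is represented by a lift w (u - w ∈ H¹₀(Ω)). -/
def IsStrongSolNPBE {d : ℕ} (Ω : Set (Euc d)) (ε : Euc d → Matrix (Fin d) (Fin d) ℂ)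
    (κ2 : Euc d → ℂ) (f w : Euc d → ℂ) (U : SobFun d Ω 2) : Prop :=
  (∃ g : Fin d → Euc d → ℂ,
    (∀ i, IsWeakDeriv Ω i (fun x => ∑ j, ε x i j * U.d1 j x) (g i)) ∧
    ∀ᵐ x ∂(volume.restrict Ω),
      -(∑ i, g i x) + κ2 x * Complex.sinh (U.u x) = f x) ∧
  MemH10 Ω (fun x => U.u x - w x)

/-- U ∈ H¹(Ω) is a weak solution of the linear PBE L u = f with boundary lift w. -/
def IsWeakSolLinPBE {d : ℕ} (Ω : Set (Euc d)) (ε : Euc d → Matrix (Fin d) (Fin d) ℂ)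
    (κ2 : Euc d → ℂ) (f w : Euc d → ℂ) (U : SobFun d Ω 1) : Prop :=
  MemH10 Ω (fun x => U.u x - w x) ∧
  ∀ Φ : SobFun d Ω 1, MemH10 Ω Φ.u →
    (∫ x in Ω, ((∑ i, ∑ j, ε x i j * U.d1 j x * (starRingEnd ℂ) (Φ.d1 i x))
        + κ2 x * U.u x * (starRingEnd ℂ) (Φ.u x)))
      = ∫ x in Ω, f x * (starRingEnd ℂ) (Φ.u x)

/-- Taylor coefficients n_k of sinh z - z : 1/k! for odd k, 0 for even k. -/
def nk (k : ℕ) : ℝ := if Odd k then 1 / (Nat.factorial k) else 0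


def opQ (A : ℝ) (g : ℝ → ℝ) (s : ℝ) : ℝ := ∫ τ in (0:ℝ)..1, τ ^ A * g (s * τ)
def opP (h : ℝ → ℝ) (r : ℝ) : ℝ := r ^ 2 * ∫ σ in (0:ℝ)..1, σ * h (r * σ)

lemma opQ_cont {A : ℝ} (hA : 0 ≤ A) {g : ℝ → ℝ} (hg : Continuous g) : Continuous (opQ A g) := by
  unfold opQ
  apply intervalIntegral.continuous_parametric_intervalIntegral_of_continuous'
  have := Real.continuous_rpow_const hA
  fun_prop

lemma opP_cont {g : ℝ → ℝ} (hg : Continuous g) : Continuous (opP g) := by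
  unfold opP
  apply Continuous.mul (by fun_prop)
  apply intervalIntegral.continuous_parametric_intervalIntegral_of_continuous'
  fun_prop

lemma opQ_bound {A : ℝ} (hA : 0 ≤ A) {g : ℝ → ℝ} {M L : ℝ} (hL : 0 ≤ L) (hM : 0 ≤ M)
    (h : ∀ t, |g t| ≤ M * Real.exp (L * t ^ 2)) (s : ℝ) :
    |opQ A g s| ≤ M * Real.exp (L * s ^ 2) := by
  unfold opQ
  have := intervalIntegral.norm_integral_le_of_norm_le_const (a := (0:ℝ)) (b := 1)
    (C := M * Real.exp (L * s ^ 2)) (f := fun τ => τ ^ A * g (s * τ)) ?_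
  · simpa using this
  intro τ hτ
  rw [uIoc_of_le zero_le_one] at hτ
  rw [norm_mul, Real.norm_eq_abs, Real.norm_eq_abs]
  have h1 : |τ ^ A| ≤ 1 := by
    rw [abs_of_nonneg (Real.rpow_nonneg hτ.1.le _)]
    exact Real.rpow_le_one hτ.1.le hτ.2 hA
  have h2 : |g (s * τ)| ≤ M * Real.exp (L * s ^ 2) := by
    refine (h _).trans ?_
    have h3 : τ ^ 2 ≤ 1 := by nlinarith [hτ.1, hτ.2]
    have h4 : (s * τ) ^ 2 ≤ s ^ 2 := by
      rw [mul_pow]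
      nlinarith [sq_nonneg s]
    apply mul_le_mul_of_nonneg_left _ hM
    apply Real.exp_le_exp.mpr
    exact mul_le_mul_of_nonneg_left h4 hL
  calc |τ ^ A| * |g (s * τ)| ≤ 1 * (M * Real.exp (L * s ^ 2)) := by gcongr
    _ = _ := one_mul _

lemma opP_bound {g : ℝ → ℝ} {M L : ℝ} (hL : 0 < L) (hM : 0 ≤ M)
    (h : ∀ t, |g t| ≤ M * Real.exp (L * t ^ 2)) (r : ℝ) :
    |opP g r| ≤ M / (2 * L) * Real.exp (L * r ^ 2) := by
  unfold opP
  have h1 : ‖∫ σ in (0:ℝ)..1, σ * g (r * σ)‖ ≤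
      ∫ σ in (0:ℝ)..1, σ * (M * Real.exp (L * (r * σ) ^ 2)) := by
    apply intervalIntegral.norm_integral_le_of_norm_le zero_le_one
    · refine Filter.Eventually.of_forall fun σ hσ => ?_
      rw [norm_mul, Real.norm_eq_abs, Real.norm_eq_abs, abs_of_pos hσ.1]
      exact mul_le_mul_of_nonneg_left (h _) hσ.1.le
    · apply Continuous.intervalIntegrable
      fun_prop
  have h2 : ∫ σ in (0:ℝ)..1, r ^ 2 * (σ * (M * Real.exp (L * (r * σ) ^ 2))) =
      M / (2 * L) * Real.exp (L * (r * 1) ^ 2) - M / (2 * L) * Real.exp (L * (r * 0) ^ 2) := by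
    apply intervalIntegral.integral_eq_sub_of_hasDerivAt
      (f := fun σ => M / (2 * L) * Real.exp (L * (r * σ) ^ 2))
    · intro x _
      have := (((((hasDerivAt_id x).const_mul r).pow 2).const_mul L).exp).const_mul (M / (2 * L))
      refine this.congr_deriv ?_
      simp only [id, mul_one, Nat.cast_ofNat, pow_one, Nat.add_one_sub_one, Pi.pow_apply]
      field_simp
    · apply Continuous.intervalIntegrable
      fun_prop
  rw [intervalIntegral.integral_const_mul] at h2
  rw [abs_mul, abs_of_nonneg (sq_nonneg r)]
  refine (mul_le_mul_of_nonneg_left h1 (sq_nonneg r)).trans ?_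
  rw [h2]
  have : 0 ≤ M / (2 * L) := by positivity
  simp
  exact this

lemma opP_eq (h : ℝ → ℝ) (r : ℝ) : opP h r = ∫ s in (0:ℝ)..r, s * h s := by
  unfold opP
  have := intervalIntegral.smul_integral_comp_mul_left (a := 0) (b := 1) (fun s => s * h s) r
  simp only [smul_eq_mul, mul_zero, mul_one] at this
  rw [← this, sq, mul_assoc]
  congr 1
  rw [← intervalIntegral.integral_const_mul]
  congr 1; ext; ring

lemma opQ_eq (A : ℝ) (g : ℝ → ℝ) {s : ℝ} (hs : 0 < s) :
    s * opQ A g s = s ^ (-A) * ∫ t in (0:ℝ)..s, t ^ A * g t := by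
  unfold opQ
  have := intervalIntegral.smul_integral_comp_mul_left (a := 0) (b := 1) (fun t => t ^ A * g t) s
  simp only [smul_eq_mul, mul_zero, mul_one] at this
  rw [← this, mul_left_comm]
  congr 1
  rw [← intervalIntegral.integral_const_mul]
  apply intervalIntegral.integral_congr
  intro τ hτ
  rw [uIcc_of_le zero_le_one] at hτ
  simp only
  rw [Real.mul_rpow hs.le hτ.1, Real.rpow_neg hs.le]
  have : s ^ A ≠ 0 := (Real.rpow_pos_of_pos hs A).ne'
  field_simp

lemma opP_deriv {h : ℝ → ℝ} (hh : Continuous h) (r : ℝ) :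
    HasDerivAt (opP h) (r * h r) r := by
  have : opP h = fun r => ∫ s in (0:ℝ)..r, s * h s := by ext; exact opP_eq _ _
  rw [this]
  have hc : Continuous fun s => s * h s := by fun_prop
  exact hc.integral_hasStrictDerivAt 0 r |>.hasDerivAt

lemma opQ_deriv {A : ℝ} (hA : 0 ≤ A) {g : ℝ → ℝ} (hg : Continuous g) {r : ℝ} (hr : 0 < r) :
    HasDerivAt (fun r => r * opQ A g r) (-(A / r) * (r * opQ A g r) + g r) r := by
  have hc : Continuous fun t => t ^ A * g t := (Real.continuous_rpow_const hA).mul hg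
  have h1 := (hc.integral_hasStrictDerivAt 0 r).hasDerivAt
  have h2 := (Real.hasDerivAt_rpow_const (x := r) (p := -A) (Or.inl hr.ne')).mul h1
  have h3 := h2.congr_of_eventuallyEq (f₁ := fun r => r * opQ A g r)
    (by filter_upwards [lt_mem_nhds hr] with s hs using opQ_eq A g hs)
  refine h3.congr_deriv ?_
  rw [opQ_eq A g hr, Real.rpow_sub_one hr.ne', ← mul_assoc (r ^ (-A)) , ← Real.rpow_add hr]
  simp
  ring

lemma opQ_sub {A : ℝ} (hA : 0 ≤ A) {g h : ℝ → ℝ} (hg : Continuous g) (hh : Continuous h) (s : ℝ) :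
    opQ A g s - opQ A h s = opQ A (fun t => g t - h t) s := by
  unfold opQ
  have := Real.continuous_rpow_const hA
  rw [← intervalIntegral.integral_sub]
  · congr 1; ext; ring
  · apply Continuous.intervalIntegrable; fun_prop
  · apply Continuous.intervalIntegrable; fun_prop

lemma opP_sub {g h : ℝ → ℝ} (hg : Continuous g) (hh : Continuous h) (s : ℝ) :
    opP g s - opP h s = opP (fun t => g t - h t) s := by
  unfold opP
  rw [← mul_sub, ← intervalIntegral.integral_sub]
  · congr 2; ext; ring
  · apply Continuous.intervalIntegrable; fun_prop
  · apply Continuous.intervalIntegrable; fun_prop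

lemma PQ_bound {A : ℝ} (hA : 0 ≤ A) {g : ℝ → ℝ} {M L : ℝ} (hL : 0 < L) (hM : 0 ≤ M)
    (h : ∀ t, |g t| ≤ M * Real.exp (L * t ^ 2)) (r : ℝ) :
    |Real.exp (-(L * r ^ 2)) * opP (opQ A g) r| ≤ M / (2 * L) := by
  rw [abs_mul, abs_of_pos (Real.exp_pos _)]
  have := opP_bound hL hM (opQ_bound hA hL.le hM h) r
  calc _ ≤ Real.exp (-(L * r ^ 2)) * (M / (2 * L) * Real.exp (L * r ^ 2)) := by gcongr
    _ = _ := by rw [mul_left_comm, ← Real.exp_add]; simp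

open BoundedContinuousFunction in
theorem exists_sol {A : ℝ} (hA : 0 ≤ A) (g : ℝ → ℝ) (K B : ℝ) (hK : 0 ≤ K)
    (hg : Continuous g)
    (hLip : ∀ x y, |g x - g y| ≤ K * |x - y|) (hB : ∀ x, |g x| ≤ B) (c : ℝ) :
    ∃ y p : ℝ → ℝ, Continuous y ∧ Continuous p ∧ y 0 = c ∧ p 0 = 0 ∧
      ∀ r > 0, HasDerivAt y (p r) r ∧ HasDerivAt p (-(A / r) * p r - g (y r)) r := by
  have hB0 : 0 ≤ B := (abs_nonneg _).trans (hB 0)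
  obtain ⟨L, hL, hKL⟩ : ∃ L : ℝ, 0 < L ∧ K / (2 * L) ≤ 1 / 2 := by
    refine ⟨K + 1, by linarith, ?_⟩
    rw [div_le_div_iff₀ (by linarith) (by norm_num)]
    linarith
  let G : (ℝ →ᵇ ℝ) → ℝ → ℝ := fun u t => g (c + Real.exp (L * t ^ 2) * u t)
  have hG : ∀ u, Continuous (G u) := fun u => by
    have := u.continuous
    show Continuous fun t => g (c + Real.exp (L * t ^ 2) * u t)
    fun_prop
  have hGB : ∀ u t, |G u t| ≤ B * Real.exp (L * t ^ 2) := fun u t => by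
    have : 1 ≤ Real.exp (L * t ^ 2) := Real.one_le_exp (by positivity)
    have := hB (c + Real.exp (L * t ^ 2) * u t)
    show |g _| ≤ _
    nlinarith
  let T : (ℝ →ᵇ ℝ) → (ℝ →ᵇ ℝ) := fun u =>
    BoundedContinuousFunction.ofNormedAddCommGroup
      (fun r => -(Real.exp (-(L * r ^ 2)) * opP (opQ A (G u)) r))
      (by
        have := opP_cont (opQ_cont hA (hG u))
        fun_prop)
      (B / (2 * L)) (fun r => by
        rw [norm_neg]
        exact PQ_bound hA hL hB0 (hGB u) r)
  have hT : ∀ u r, T u r = -(Real.exp (-(L * r ^ 2)) * opP (opQ A (G u)) r) := fun u r => rfl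
  have hc : ContractingWith (1/2) T := by
    refine ⟨by rw [← NNReal.coe_lt_coe]; norm_num, LipschitzWith.of_dist_le_mul fun u v => ?_⟩
    rw [BoundedContinuousFunction.dist_le (by positivity)]
    intro r
    rw [Real.dist_eq, hT, hT]
    have e : -(Real.exp (-(L * r ^ 2)) * opP (opQ A (G u)) r)
        - -(Real.exp (-(L * r ^ 2)) * opP (opQ A (G v)) r)
        = Real.exp (-(L * r ^ 2)) * opP (opQ A (fun t => G v t - G u t)) r := by
      have : opQ A (fun t => G v t - G u t) = fun s => opQ A (G v) s - opQ A (G u) s := by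
        ext s; exact (opQ_sub hA (hG v) (hG u) s).symm
      rw [this, ← opP_sub (opQ_cont hA (hG v)) (opQ_cont hA (hG u))]
      ring
    rw [e]
    refine (PQ_bound (M := K * dist u v) hA hL (by positivity) ?_ r).trans ?_
    · intro t
      refine (hLip _ _).trans ?_
      rw [mul_assoc]
      gcongr
      rw [add_sub_add_left_eq_sub, ← mul_sub, abs_mul, abs_of_pos (Real.exp_pos _), mul_comm]
      gcongr
      rw [← Real.dist_eq, dist_comm]
      exact BoundedContinuousFunction.dist_coe_le_dist _
    · rw [mul_div_right_comm]
      calc _ ≤ 1 / 2 * dist u v := by gcongr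
        _ = _ := by simp
  let u := ContractingWith.fixedPoint T hc
  have hu : T u = u := hc.fixedPoint_isFixedPt
  let y : ℝ → ℝ := fun r => c + Real.exp (L * r ^ 2) * u r
  have hGy : G u = fun t => g (y t) := rfl
  have hy : ∀ r, y r = c - opP (opQ A (G u)) r := fun r => by
    show c + Real.exp (L * r ^ 2) * u r = _
    rw [← hu, hT, hu, mul_neg, ← mul_assoc, ← Real.exp_add]
    simp
    ring
  have hQ := opQ_cont hA (hG u)
  refine ⟨y, fun r => -(r * opQ A (G u) r), ?_, by fun_prop, ?_, by simp, ?_⟩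
  · have := opP_cont hQ
    rw [funext hy]; fun_prop
  · rw [hy]; simp [opP]
  intro r hr
  constructor
  · rw [funext hy]
    exact (opP_deriv hQ r).const_sub c
  · have := (opQ_deriv hA (hG u) hr).neg
    refine this.congr_deriv ?_
    rw [hGy]; ring

lemma mvt_le {f f' : ℝ → ℝ} {a b C : ℝ} (hab : a ≤ b) (hf : ∀ x, a ≤ x → HasDerivAt f (f' x) x)
    (hC : ∀ x, a ≤ x → f' x ≤ C) : f b ≤ f a + C * (b - a) := by
  have := (convex_Ici a).image_sub_le_mul_sub_of_deriv_le (f := f) (C := C)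
    (fun x hx => (hf x hx).continuousAt.continuousWithinAt)
    (fun x hx => by
      rw [interior_Ici] at hx
      exact (hf x (le_of_lt hx)).differentiableAt.differentiableWithinAt)
    (fun x hx => by
      rw [interior_Ici] at hx
      rw [(hf x (le_of_lt hx)).deriv]
      exact hC x (le_of_lt hx)) a self_mem_Ici b hab hab
  linarith

lemma osc {A k M : ℝ} (hA : 0 ≤ A) (hk : 0 < k) (hM : 0 ≤ M) {z p φ : ℝ → ℝ}
    (hz : ∀ r > M, HasDerivAt z (p r) r)
    (hp : ∀ r > M, HasDerivAt p (-(A / r) * p r - φ r) r)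
    (hpos : ∀ r > M, 0 < z r) (hφ : ∀ r > M, k * z r ≤ φ r) : False := by
  obtain ⟨a, rfl⟩ : ∃ a, A = 2 * a := ⟨A / 2, by ring⟩
  let M1 := M + 1 + 2 * a ^ 2 / k
  have hM1 : M + 1 ≤ M1 := by
    have : 0 ≤ 2 * a ^ 2 / k := by positivity
    show M + 1 ≤ M + 1 + 2 * a ^ 2 / k
    linarith
  have hMa : 2 * a ^ 2 / k ≤ M1 := by
    show _ ≤ M + 1 + 2 * a ^ 2 / k
    linarith
  let w : ℝ → ℝ := fun r => r ^ a * z r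
  let v : ℝ → ℝ := fun r => a * r ^ (a - 1) * z r + r ^ a * p r
  let v' : ℝ → ℝ := fun r => a * (a - 1) * r ^ (a - 2) * z r - r ^ a * φ r
  have hw : ∀ r, M1 ≤ r → HasDerivAt w (v r) r := fun r hr => by
    have h0 : 0 < r := by linarith
    exact (Real.hasDerivAt_rpow_const (Or.inl h0.ne')).mul (hz r (by linarith))
  have hv : ∀ r, M1 ≤ r → HasDerivAt v (v' r) r := fun r hr => by
    have h0 : 0 < r := by linarith
    have h1 := (((Real.hasDerivAt_rpow_const (p := a - 1) (Or.inl h0.ne')).const_mul a).mul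
      (hz r (by linarith))).add ((Real.hasDerivAt_rpow_const (p := a) (Or.inl h0.ne')).mul
        (hp r (by linarith)))
    refine h1.congr_deriv ?_
    simp only [v']
    rw [show a - 1 - 1 = a - 2 by ring, Real.rpow_sub_one h0.ne']
    field_simp
    ring
  have hwpos : ∀ r, M1 ≤ r → 0 < w r := fun r hr =>
    mul_pos (Real.rpow_pos_of_pos (by linarith) _) (hpos r (by linarith))
  have hv' : ∀ r, M1 ≤ r → v' r ≤ -(k / 2) * w r := fun r hr => by
    have h0 : 0 < r := by linarith
    have h1 : r ^ (a - 2) * r ^ 2 = r ^ a := by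
      rw [← Real.rpow_natCast, ← Real.rpow_add h0]; simp
    have h2 := Real.rpow_pos_of_pos h0 (a - 2)
    have h3 := hpos r (by linarith)
    have h4 := hφ r (by linarith)
    have h5 : 2 * a ^ 2 ≤ k * r ^ 2 := by
      have := (div_le_iff₀ hk).1 hMa
      have : r ≤ r ^ 2 := by nlinarith
      have : 2 * a ^ 2 ≤ r * k := by nlinarith
      nlinarith
    have h6 : 2 * (a * (a - 1)) ≤ k * r ^ 2 := by nlinarith
    have h7 : 0 < r ^ a := Real.rpow_pos_of_pos h0 a
    have h8 : r ^ a * (k * z r) ≤ r ^ a * φ r := mul_le_mul_of_nonneg_left h4 h7.le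
    have h9 := mul_le_mul_of_nonneg_right h6 (mul_pos h2 h3).le
    have h10 : k * r ^ 2 * (r ^ (a - 2) * z r) = k * (r ^ a * z r) := by rw [← h1]; ring
    simp only [v', w]
    linarith
  have hvnn : ∀ r, M1 ≤ r → 0 ≤ v r := by
    intro r hr
    by_contra! hneg
    have hle : ∀ x, r ≤ x → v x ≤ v r := fun x hx => by
      have := mvt_le (f := v) (f' := v') (C := 0) hx (fun t ht => hv t (hr.trans ht)) (fun t ht => by
        have h1 := hv' t (hr.trans ht)
        have h2 := hwpos t (hr.trans ht)
        nlinarith)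
      linarith
    have hb : r ≤ r + w r / (- v r) := by
      have : 0 ≤ w r / (- v r) := div_nonneg (hwpos r hr).le (by linarith)
      linarith
    have h1 := mvt_le (f := w) (f' := v) hb (fun t ht => hw t (hr.trans ht)) hle
    have h2 := hwpos _ (hr.trans hb)
    have h3 : v r * (r + w r / (- v r) - r) = - w r := by
      field_simp [hneg.ne]
      ring
    linarith
  have hmono : ∀ r, M1 ≤ r → w M1 ≤ w r := fun r hr => by
    have := mvt_le (f := fun x => - w x) (f' := fun x => - v x) (C := 0) hr
      (fun t ht => (hw t ht).neg) (fun t ht => by linarith [hvnn t ht])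
    linarith
  have h0 := hwpos M1 le_rfl
  have hd : 0 < k / 2 * w M1 := by positivity
  have hb : M1 ≤ M1 + (v M1 + 1) / (k / 2 * w M1) := by
    have : 0 ≤ (v M1 + 1) / (k / 2 * w M1) := div_nonneg (by linarith [hvnn M1 le_rfl]) hd.le
    linarith
  have h1 := mvt_le (f := v) (f' := v') (C := -(k / 2 * w M1)) hb hv (fun t ht => by
    have h1 := hv' t ht
    have h2 := hmono t ht
    nlinarith)
  have h2 := hvnn _ hb
  have h3 : -(k / 2 * w M1) * (M1 + (v M1 + 1) / (k / 2 * w M1) - M1) = -(v M1 + 1) := by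
    rw [add_sub_cancel_left, neg_mul, mul_div_cancel₀ _ hd.ne']
  linarith

lemma sinh_sub_ge {x x0 : ℝ} (h : x0 ≤ x) : x - x0 ≤ Real.sinh x - Real.sinh x0 := by
  have := Real.sinh_sub_id_strictMono.monotone h
  linarith

lemma exists_N {κ lam c : ℝ} (hκ : 0 < κ) (hlam : 0 ≤ lam) :
    ∃ N : ℝ, |c| ≤ N ∧ lam ≤ κ ^ 2 * Real.sinh N ∧
      κ ^ 2 * Real.cosh c - lam * c < κ ^ 2 * Real.cosh N - lam * N := by
  set F := κ ^ 2 * Real.cosh c - lam * c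
  let N := 1 + |c| + 4 * (lam + 1 + |F|) / κ ^ 2
  have hk : 0 < κ ^ 2 := by positivity
  have hN : N = 1 + |c| + 4 * (lam + 1 + |F|) / κ ^ 2 := rfl
  have hc := abs_nonneg c
  have hF := abs_nonneg F
  have hF' := le_abs_self F
  have h0 : 0 ≤ 4 * (lam + 1 + |F|) / κ ^ 2 := by positivity
  have hN1 : 1 ≤ N := by linarith
  have h1 : 4 * (lam + 1 + |F|) ≤ κ ^ 2 * N := by
    have : 4 * (lam + 1 + |F|) / κ ^ 2 ≤ N := by linarith
    have := (div_le_iff₀ hk).1 this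
    linarith
  refine ⟨N, by linarith, ?_, ?_⟩
  · have : N ≤ Real.sinh N := Real.self_le_sinh_iff.2 (by linarith)
    nlinarith
  · have h2 : (N / 2) ^ 2 ≤ Real.cosh N := by
      have e : Real.cosh N = Real.cosh (N / 2) ^ 2 + Real.sinh (N / 2) ^ 2 := by
        rw [← Real.cosh_two_mul]; congr 1; ring
      have : N / 2 ≤ Real.sinh (N / 2) := Real.self_le_sinh_iff.2 (by linarith)
      nlinarith [sq_nonneg (Real.cosh (N / 2))]
    have h3 : κ ^ 2 * (N / 2) ^ 2 ≤ κ ^ 2 * Real.cosh N := by gcongr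
    have h4 : (lam + 1 + |F|) * N ≤ κ ^ 2 * (N / 2) ^ 2 := by nlinarith
    nlinarith

def clampN (N x : ℝ) : ℝ := max (min x N) (-N)

lemma clampN_eq {N x : ℝ} (h1 : -N ≤ x) (h2 : x ≤ N) : clampN N x = x := by
  simp [clampN, h1, h2]

lemma sinh_lip {N x y : ℝ} (hx : x ∈ Icc (-N) N) (hy : y ∈ Icc (-N) N) :
    |Real.sinh x - Real.sinh y| ≤ Real.cosh N * |x - y| := by
  have := (convex_Icc (-N) N).norm_image_sub_le_of_norm_deriv_le (f := Real.sinh)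
    (C := Real.cosh N) (fun t _ => Real.differentiable_sinh t) (fun t ht => by
      rw [Real.deriv_sinh, Real.norm_eq_abs, abs_of_pos (Real.cosh_pos t), Real.cosh_le_cosh]
      exact (abs_le.2 ht).trans (le_abs_self N)) hy hx
  simpa using this

theorem global_sol {A κ lam : ℝ} (hA : 0 ≤ A) (hκ : 0 < κ) (hlam : 0 ≤ lam) (c : ℝ) :
    ∃ y p : ℝ → ℝ, Continuous y ∧ Continuous p ∧ y 0 = c ∧ p 0 = 0 ∧
      ∀ r > 0, HasDerivAt y (p r) r ∧
        HasDerivAt p (-(A / r) * p r - (κ ^ 2 * Real.sinh (y r) - lam)) r := by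
  obtain ⟨N, hcN, hN1, hN2⟩ := exists_N (c := c) hκ hlam
  have hN0 : 0 ≤ N := (abs_nonneg c).trans hcN
  have hcl := abs_le.1 hcN
  let g : ℝ → ℝ := fun x => κ ^ 2 * Real.sinh (clampN N x) - lam
  have hmem : ∀ x, clampN N x ∈ Icc (-N) N := fun x =>
    ⟨le_max_right _ _, max_le (min_le_right _ _) (by linarith)⟩
  have hclc : Continuous (clampN N) := by unfold clampN; fun_prop
  have hgc : Continuous g := by
    have := Real.continuous_sinh
    show Continuous fun x => κ ^ 2 * Real.sinh (clampN N x) - lam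
    fun_prop
  have hgl : ∀ x y, |g x - g y| ≤ κ ^ 2 * Real.cosh N * |x - y| := fun x y => by
    have h1 := sinh_lip (hmem x) (hmem y)
    have h2 : |clampN N x - clampN N y| ≤ |x - y| := by
      refine (abs_max_sub_max_le_abs _ _ _).trans ((abs_min_sub_min_le_max _ _ _ _).trans ?_)
      simp
    have h3 : g x - g y = κ ^ 2 * (Real.sinh (clampN N x) - Real.sinh (clampN N y)) := by
      simp only [g]; ring
    rw [h3, abs_mul, abs_of_nonneg (sq_nonneg κ), mul_assoc]
    have := Real.cosh_pos N
    gcongr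
    exact h1.trans (by gcongr)
  have hgB : ∀ x, |g x| ≤ κ ^ 2 * Real.sinh N + lam := fun x => by
    have h1 : |Real.sinh (clampN N x)| ≤ Real.sinh N := by
      rw [Real.abs_sinh, Real.sinh_le_sinh]
      exact abs_le.2 (hmem x)
    refine (abs_sub _ _).trans ?_
    rw [abs_mul, abs_of_nonneg (sq_nonneg κ), abs_of_nonneg hlam]
    gcongr
  obtain ⟨y, p, hy, hp, hy0, hp0, hd⟩ := exists_sol hA g _ _
    (by have := Real.cosh_pos N; positivity) hgc hgl hgB c
  refine ⟨y, p, hy, hp, hy0, hp0, ?_⟩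
  let Φ : ℝ → ℝ := fun x => ∫ t in c..x, g t
  have hΦ : ∀ x, HasDerivAt Φ (g x) x := fun x => (hgc.integral_hasStrictDerivAt c x).hasDerivAt
  have hgi : ∀ a b, IntervalIntegrable g volume a b := fun a b => hgc.intervalIntegrable a b
  let E : ℝ → ℝ := fun r => p r ^ 2 / 2 + Φ (y r)
  have hE : ∀ r > 0, HasDerivAt E (-(A / r) * p r ^ 2) r := fun r hr => by
    have h1 := ((((hd r hr).2.pow 2).div_const 2)).add ((hΦ (y r)).comp r (hd r hr).1)
    refine h1.congr_deriv ?_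
    simp
    ring
  have hEc : Continuous E := by
    have : Continuous Φ := continuous_iff_continuousAt.2 fun x => (hΦ x).continuousAt
    show Continuous fun r => p r ^ 2 / 2 + Φ (y r)
    fun_prop
  have hanti : AntitoneOn E (Ici 0) := by
    apply antitoneOn_of_deriv_nonpos (convex_Ici 0) hEc.continuousOn
    · intro x hx
      rw [interior_Ici] at hx
      exact (hE x hx).differentiableAt.differentiableWithinAt
    · intro x hx
      rw [interior_Ici] at hx
      rw [(hE x hx).deriv]
      have : 0 ≤ A / x := div_nonneg hA (le_of_lt hx)
      nlinarith [sq_nonneg (p x)]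
  have hneg : ∀ r, 0 ≤ r → Φ (y r) ≤ 0 := fun r hr => by
    have h1 := hanti self_mem_Ici hr hr
    have h2 : E 0 = 0 := by simp [E, hp0, hy0, Φ]
    have h3 : E r = p r ^ 2 / 2 + Φ (y r) := rfl
    nlinarith [sq_nonneg (p r)]
  have hΦin : ∀ x ∈ Icc (-N) N, Φ x =
      (κ ^ 2 * Real.cosh x - lam * x) - (κ ^ 2 * Real.cosh c - lam * c) := fun x hx => by
    apply intervalIntegral.integral_eq_sub_of_hasDerivAt
      (f := fun x => κ ^ 2 * Real.cosh x - lam * x) _ (hgi _ _)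
    intro t ht
    have ht' : t ∈ Icc (-N) N := (uIcc_subset_Icc (by exact hcl) hx) ht
    have := ((Real.hasDerivAt_cosh t).const_mul (κ ^ 2)).sub ((hasDerivAt_id t).const_mul lam)
    refine this.congr_deriv ?_
    simp only [g]
    rw [clampN_eq ht'.1 ht'.2]; ring
  have hbd : ∀ r, 0 ≤ r → y r ∈ Icc (-N) N := fun r hr => by
    have hr' := hneg r hr
    constructor
    · by_contra! hlt
      have h1 : Φ (y r) = Φ (-N) + ∫ t in (-N)..(y r), g t :=
        (intervalIntegral.integral_add_adjacent_intervals (hgi _ _) (hgi _ _)).symm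
      have h2 := hΦin (-N) ⟨le_rfl, by linarith⟩
      rw [Real.cosh_neg] at h2
      have h3 : ∫ t in (y r)..(-N), g t ≤ ∫ t in (y r)..(-N), (0 : ℝ) := by
        apply intervalIntegral.integral_mono_on hlt.le (hgi _ _) (by simp)
        intro t ht
        have : clampN N t = -N := by
          unfold clampN
          exact max_eq_right ((min_le_left _ _).trans ht.2)
        simp only [g]
        rw [this, Real.sinh_neg]
        have := Real.sinh_nonneg_iff.2 hN0
        nlinarith [sq_nonneg κ]
      rw [intervalIntegral.integral_symm] at h3
      simp at h3
      nlinarith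
    · by_contra! hlt
      have h1 : Φ (y r) = Φ N + ∫ t in N..(y r), g t :=
        (intervalIntegral.integral_add_adjacent_intervals (hgi _ _) (hgi _ _)).symm
      have h2 := hΦin N ⟨by linarith, le_rfl⟩
      have h3 : ∫ t in N..(y r), (0 : ℝ) ≤ ∫ t in N..(y r), g t := by
        apply intervalIntegral.integral_mono_on hlt.le (by simp) (hgi _ _)
        intro t ht
        have : clampN N t = N := by
          unfold clampN
          rw [min_eq_right ht.1, max_eq_left (by linarith)]
        simp only [g]
        rw [this]
        linarith
      simp at h3
      linarith
  intro r hr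
  have h := hd r hr
  have hb := hbd r hr.le
  refine ⟨h.1, h.2.congr_deriv ?_⟩
  simp only [g]
  rw [clampN_eq hb.1 hb.2]

lemma smooth_sol {A κ lam : ℝ} {y p : ℝ → ℝ}
    (hd : ∀ r > 0, HasDerivAt y (p r) r ∧
        HasDerivAt p (-(A / r) * p r - (κ ^ 2 * Real.sinh (y r) - lam)) r) (n : ℕ) :
    ContDiffOn ℝ n y (Ioi 0) ∧ ContDiffOn ℝ n p (Ioi 0) := by
  have hdy : DifferentiableOn ℝ y (Ioi 0) := fun r hr =>
    (hd r hr).1.differentiableAt.differentiableWithinAt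
  have hdp : DifferentiableOn ℝ p (Ioi 0) := fun r hr =>
    (hd r hr).2.differentiableAt.differentiableWithinAt
  induction n with
  | zero => exact ⟨contDiffOn_zero.2 hdy.continuousOn, contDiffOn_zero.2 hdp.continuousOn⟩
  | succ n ih =>
    obtain ⟨h1, h2⟩ := ih
    push_cast
    rw [contDiffOn_succ_iff_deriv_of_isOpen isOpen_Ioi,
      contDiffOn_succ_iff_deriv_of_isOpen isOpen_Ioi]
    refine ⟨⟨hdy, by simp, h2.congr fun r hr => (hd r hr).1.deriv⟩, hdp, by simp, ?_⟩
    refine ContDiffOn.congr (f := fun r => -(A / r) * p r - (κ ^ 2 * Real.sinh (y r) - lam)) ?_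
      fun r hr => (hd r hr).2.deriv
    have h3 : ContDiffOn ℝ n (fun r => Real.sinh (y r)) (Ioi 0) :=
      Real.contDiff_sinh.comp_contDiffOn h1
    have h4 : ContDiffOn ℝ n (fun r : ℝ => A / r) (Ioi 0) :=
      contDiffOn_const.div contDiffOn_id fun r hr => (ne_of_gt hr)
    exact (h4.neg.mul h2).sub ((contDiffOn_const.mul h3).sub contDiffOn_const)

/-- Lemma `NonuniqueNonlinearBessel`: for every κ̃ > 0, λ ≥ 0, A ≥ 0
and c ∈ ℝ there exist R > C_B/κ̃ and y ∈ C^∞_loc((0,∞); ℝ) with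
  r y'' + A y' + κ̃² r sinh y = r λ on (0,∞),
  y(0+) = c, y'(0+) = 0, and y(R) = arcsinh(λ/κ̃²). -/
theorem npbe_singular_bessel_solution
    (d : ℕ) (hd : 1 ≤ d) (κt lam A c : ℝ)
    (hκ : 0 < κt) (hlam : 0 ≤ lam) (hA : 0 ≤ A)
    (CB : ℝ) (hCB0 : 0 < CB)
    (hCB : ∀ R : ℝ, 0 < R → lambda1 (Metric.ball (0 : Euc d) R) = CB / R^2) :
    ∃ R : ℝ, CB / κt < R ∧ ∃ y : ℝ → ℝ,
      ContDiffOn ℝ (⊤ : ℕ∞) y (Ioi (0 : ℝ)) ∧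
      (∀ r ∈ Ioi (0 : ℝ),
        r * deriv (deriv y) r + A * deriv y r
          + κt^2 * r * Real.sinh (y r) = r * lam) ∧
      Tendsto y (nhdsWithin 0 (Ioi 0)) (nhds c) ∧
      Tendsto (deriv y) (nhdsWithin 0 (Ioi 0)) (nhds 0) ∧
      y R = Real.arsinh (lam / κt^2) := by
  obtain ⟨y, p, hy, hp, hy0, hp0, hd'⟩ := global_sol hA hκ hlam c
  have hM : 0 ≤ CB / κt := by positivity
  set M := CB / κt with hMdef
  set ys := Real.arsinh (lam / κt ^ 2) with hys
  have hsys : κt ^ 2 * Real.sinh ys = lam := by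
    rw [hys, Real.sinh_arsinh]
    field_simp
  have hR : ∃ R, M < R ∧ y R = ys := by
    by_contra! hne
    have hk : 0 < κt ^ 2 := by positivity
    have hsign : (∀ r > M, ys < y r) ∨ (∀ r > M, y r < ys) := by
      by_contra! hcon
      obtain ⟨⟨r1, hr1, h1⟩, r2, hr2, h2⟩ := hcon
      have : ys ∈ y '' (Ioi M) :=
        (isPreconnected_Ioi.image y hy.continuousOn).ordConnected.out
          (mem_image_of_mem y hr1) (mem_image_of_mem y hr2) ⟨h1, h2⟩
      obtain ⟨r, hr, h⟩ := this
      exact hne r hr h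
    rcases hsign with h | h
    · refine osc (z := fun r => y r - ys) (p := p)
        (φ := fun r => κt ^ 2 * Real.sinh (y r) - lam) hA hk hM
        (fun r hr => (hd' r (hM.trans_lt hr)).1.sub_const _)
        (fun r hr => (hd' r (hM.trans_lt hr)).2) (fun r hr => sub_pos.2 (h r hr)) ?_
      intro r hr
      have := mul_le_mul_of_nonneg_left (sinh_sub_ge (h r hr).le) hk.le
      linarith
    · refine osc (z := fun r => ys - y r) (p := fun r => - p r)
        (φ := fun r => -(κt ^ 2 * Real.sinh (y r) - lam)) hA hk hM
        (fun r hr => (hd' r (hM.trans_lt hr)).1.const_sub _)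
        (fun r hr => (hd' r (hM.trans_lt hr)).2.neg.congr_deriv (by ring))
        (fun r hr => sub_pos.2 (h r hr)) ?_
      intro r hr
      have := mul_le_mul_of_nonneg_left (sinh_sub_ge (h r hr).le) hk.le
      linarith
  obtain ⟨R, hRM, hyR⟩ := hR
  have hder : ∀ r > 0, deriv y r = p r := fun r hr => (hd' r hr).1.deriv
  refine ⟨R, hRM, y, ?_, ?_, ?_, ?_, hyR⟩
  · exact contDiffOn_infty.2 fun n => (smooth_sol hd' n).1
  · intro r hr
    have hr0 : 0 < r := hr
    have h2 : deriv (deriv y) r = -(A / r) * p r - (κt ^ 2 * Real.sinh (y r) - lam) := by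
      have : deriv y =ᶠ[𝓝 r] p := by
        filter_upwards [lt_mem_nhds hr0] with s hs using hder s hs
      rw [this.deriv_eq]
      exact (hd' r hr).2.deriv
    rw [h2, hder r hr]
    field_simp
    ring
  · have := hy.tendsto 0
    rw [hy0] at this
    exact this.mono_left nhdsWithin_le_nhds
  · have := hp.tendsto 0
    rw [hp0] at this
    refine (this.mono_left nhdsWithin_le_nhds).congr' ?_
    filter_upwards [self_mem_nhdsWithin] with s hs using (hder s hs).symm
end
end

section
/- Let Ω ⊂ ℝ³ be bounded and convex and let C_S(2) be the norm of the embedding H²(Ω) ↪ L^∞(Ω). For every p ∈ (3, 6), |Ω|^{−1/2} ≤ C_S(2) ≤ 2^{1/p} C_{2,p} C_{p,∞}, where C_{p,q} denotes a constant with ‖u‖_{L^q(Ω)} ≤ C_{p,q}‖u‖_{W^{1,p}(Ω)} for all u ∈ W^{1,p}(Ω). If moreover |Ω| = C d_Ω³ for some C > 0, then there exists d₀ > 0 such that for every d_Ω ≤ d₀, |Ω|^{−1/2} ≤ C_S(2) ≤ 2^{3/2} |Ω|^{−1/2}. -/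
open MeasureTheory Set Filter
open scoped ENNReal NNReal Topology BigOperators

noncomputable section

/-- The L^p(Ω) norm (p a real exponent). -/
def LpN {d : ℕ} (Ω : Set (Euc d)) (p : ℝ) (u : Euc d → ℂ) : ℝ :=
  (eLpNorm u (ENNReal.ofReal p) (volume.restrict Ω)).toReal

/-- A bundled W^{1,p}(Ω) function: the function and its weak partial derivatives,
all in L^p(Ω). -/
structure W1Fun (d : ℕ) (Ω : Set (Euc d)) (p : ℝ) where
  u : Euc d → ℂ
  du : Fin d → Euc d → ℂ
  hu : MemLp u (ENNReal.ofReal p) (volume.restrict Ω)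
  hdu : ∀ i, MemLp (du i) (ENNReal.ofReal p) (volume.restrict Ω)
  hw : ∀ i, IsWeakDeriv Ω i u (du i)

/-- The W^{1,p}(Ω) norm  ( ‖u‖_p^p + ∑_i ‖∂_i u‖_p^p )^{1/p}. -/
def W1Fun.norm {d : ℕ} {Ω : Set (Euc d)} {p : ℝ} (U : W1Fun d Ω p) : ℝ :=
  ((LpN Ω p U.u)^p + ∑ i, (LpN Ω p (U.du i))^p) ^ (1/p)

/-- C_S(2) : the operator norm of the embedding H²(Ω) ↪ L^∞(Ω). -/
def CS2 {d : ℕ} (Ω : Set (Euc d)) : ℝ :=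
  sInf {C : ℝ | 0 ≤ C ∧ ∀ U : SobFun d Ω 2, LinfN Ω U.u ≤ C * SobNormInt U}

lemma exists_eta (Ω : Set (Euc 3)) (hΩo : IsOpen Ω) (hΩb : Bornology.IsBounded Ω)
    (hne : Ω.Nonempty) :
    ∃ η : Euc 3 → ℝ, ContDiff ℝ (⊤ : ℕ∞) η ∧ HasCompactSupport η ∧ tsupport η ⊆ Ω ∧
      (∀ x, 0 ≤ η x) ∧ (∀ x, η x ≤ 2 / (volume Ω).toReal) ∧ ∫ x, η x = 1 := by
  have hpos : 0 < volume Ω := hΩo.measure_pos volume hne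
  have hfin : volume Ω ≠ ⊤ := hΩb.measure_lt_top.ne
  have hlt : volume Ω / 2 < volume Ω := ENNReal.half_lt_self hpos.ne' hfin
  obtain ⟨K, hKΩ, hK, hKv⟩ := hΩo.exists_lt_isCompact hlt
  obtain ⟨L, hL, hKL, hLΩ⟩ := exists_compact_between hK hΩo hKΩ
  obtain ⟨f, hf, hfr, hfs, hf1⟩ := exists_contMDiff_support_eq_eq_one_iff (modelWithCornersSelf ℝ (Euc 3))
    (n := (⊤:ℕ∞)) isOpen_interior hK.isClosed hKL
  have hfsm : ContDiff ℝ (⊤ : ℕ∞) f := hf.contDiff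
  have hts : tsupport f ⊆ L := by
    rw [tsupport, hfs]; exact closure_minimal interior_subset hL.isClosed
  have hcs : HasCompactSupport f := HasCompactSupport.of_support_subset_isCompact hL
    ((subset_tsupport f).trans hts)
  have hint : Integrable f := hfsm.continuous.integrable_of_hasCompactSupport hcs
  have h0 : ∀ x, 0 ≤ f x := fun x => (hfr (mem_range_self x)).1
  have h1 : ∀ x, f x ≤ 1 := fun x => (hfr (mem_range_self x)).2
  have hI : (volume Ω).toReal / 2 ≤ ∫ x, f x := by
    have a1 : (volume Ω).toReal / 2 ≤ (volume K).toReal := by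
      have := (ENNReal.toReal_lt_toReal (by finiteness) (hK.measure_lt_top.ne)).2 hKv
      simpa using this.le
    have a2 : (volume K).toReal = ∫ x in K, f x := by
      rw [setIntegral_congr_fun hK.measurableSet (g := fun _ => (1:ℝ)) (fun x hx => (hf1 x).1 hx)]
      simp [Measure.real]
    rw [a2] at a1
    exact a1.trans (setIntegral_le_integral hint (Eventually.of_forall h0))
  have hVpos : 0 < (volume Ω).toReal := ENNReal.toReal_pos hpos.ne' hfin
  have hIpos : 0 < ∫ x, f x := lt_of_lt_of_le (by positivity) hI
  refine ⟨fun x => (∫ x, f x)⁻¹ * f x, contDiff_const.mul hfsm, hcs.mul_left, ?_, ?_, ?_, ?_⟩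
  · exact (tsupport_mul_subset_right).trans (hts.trans hLΩ)
  · intro x; have := h0 x; positivity
  · intro x
    calc (∫ x, f x)⁻¹ * f x ≤ (∫ x, f x)⁻¹ * 1 := by gcongr; exact h1 x
      _ ≤ ((volume Ω).toReal / 2)⁻¹ := by rw [mul_one]; gcongr
      _ = _ := by rw [inv_div]
  · rw [integral_const_mul, inv_mul_cancel₀ hIpos.ne']

lemma riesz_int (a : ℝ) (ha : a < 3) (R : ℝ) :
    ∃ N : ℝ≥0∞, N ≠ ⊤ ∧ ∀ x : Euc 3, ∫⁻ z in Metric.ball x R, (‖z - x‖ₑ ^ (-a)) ≤ N := by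
  have h := integrableOn_ball_of_norm_le_rpow (E := Euc 3) (F := ℝ) (μ := volume)
    (f := fun z => ‖z‖ ^ (-a)) (C := 1) (α := a) (r := R) (by simp) (by simpa using ha) (by
      refine Eventually.of_forall fun x => ?_
      simp [abs_of_nonneg (Real.rpow_nonneg (norm_nonneg x) _)]) ((measurable_norm.pow_const _).aestronglyMeasurable)
  refine ⟨∫⁻ z in Metric.ball (0 : Euc 3) R, ‖z‖ₑ ^ (-a), ?_, fun x => ?_⟩
  · have h2 := h.2
    rw [HasFiniteIntegral] at h2
    refine ne_top_of_le_ne_top h2.ne (le_of_eq ?_)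
    apply lintegral_congr_ae
    refine ae_restrict_of_ae ?_
    filter_upwards [Measure.ae_ne volume (0 : Euc 3)] with z hz
    have hz' : 0 < ‖z‖ := norm_pos_iff.2 hz
    rw [Real.enorm_eq_ofReal (by positivity), ← ENNReal.ofReal_rpow_of_pos hz', ofReal_norm]
  · rw [← lintegral_indicator Metric.isOpen_ball.measurableSet, ← lintegral_indicator Metric.isOpen_ball.measurableSet,
     ← lintegral_sub_right_eq_self (fun z => (Metric.ball (0 : Euc 3) R).indicator (fun z => ‖z‖ₑ ^ (-a)) z) x]
    refine lintegral_mono fun z => le_of_eq ?_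
    simp [indicator, dist_eq_norm]

/-- rescaled kernel -/
def kern (η : Euc 3 → ℝ) (x : Euc 3) (t : ℝ) (z : Euc 3) : ℝ :=
  (t⁻¹)^3 * η (x + t⁻¹ • (z - x))

lemma kern_contDiff {η : Euc 3 → ℝ} (hη : ContDiff ℝ (⊤ : ℕ∞) η) (x : Euc 3) (t : ℝ) :
    ContDiff ℝ (⊤ : ℕ∞) (kern η x t) := by
  unfold kern
  fun_prop

lemma kern_tsupport_aux {η : Euc 3 → ℝ} (x : Euc 3) {t : ℝ} (ht : 0 < t) :
    Function.support (kern η x t) ⊆ (fun y => x + t • (y - x)) '' tsupport η := by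
  intro z hz
  refine ⟨x + t⁻¹ • (z - x), ?_, ?_⟩
  · apply subset_tsupport
    intro h0
    apply hz
    simp [kern, h0]
  · simp [smul_smul, ht.ne']

lemma kern_tsupport {η : Euc 3 → ℝ} (hc : HasCompactSupport η) (x : Euc 3) {t : ℝ} (ht : 0 < t) :
    tsupport (kern η x t) ⊆ (fun y => x + t • (y - x)) '' tsupport η := by
  refine closure_minimal (kern_tsupport_aux x ht) ?_
  exact (hc.isCompact.image (by fun_prop)).isClosed

lemma kern_hcs {η : Euc 3 → ℝ} (hc : HasCompactSupport η) (x : Euc 3) {t : ℝ} (ht : 0 < t) :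
    HasCompactSupport (kern η x t) :=
  HasCompactSupport.of_support_subset_isCompact (hc.isCompact.image (by fun_prop))
    (kern_tsupport_aux x ht)

lemma kern_tsupport_sub {Ω : Set (Euc 3)} (hΩ : Convex ℝ Ω) {η : Euc 3 → ℝ}
    (hc : HasCompactSupport η) (hs : tsupport η ⊆ Ω) {x : Euc 3} (hx : x ∈ Ω)
    {t : ℝ} (ht : 0 < t) (ht1 : t ≤ 1) :
    tsupport (kern η x t) ⊆ Ω := by
  refine (kern_tsupport hc x ht).trans ?_
  rintro _ ⟨y, hy, rfl⟩
  exact hΩ.add_smul_sub_mem hx (hs hy) ⟨ht.le, ht1⟩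

lemma kern_integral {η : Euc 3 → ℝ} (h1 : ∫ x, η x = 1) (x : Euc 3) {t : ℝ} (ht : 0 < t) :
    ∫ z, kern η x t z = 1 := by
  unfold kern
  rw [integral_const_mul]
  have a : ∫ z, η (x + t⁻¹ • (z - x)) = ∫ z, η (x + t⁻¹ • z) :=
    integral_sub_right_eq_self (fun z => η (x + t⁻¹ • z)) x
  rw [a, Measure.integral_comp_smul volume (fun z => η (x + z)), integral_add_left_eq_self (fun z => η z) x, h1]
  simp only [finrank_euclideanSpace, Fintype.card_fin]
  rw [abs_of_nonneg (by positivity)]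
  simp only [smul_eq_mul, mul_one]
  field_simp

lemma kern_hasDerivAt {η : Euc 3 → ℝ} (hη : ContDiff ℝ (⊤ : ℕ∞) η) (x z : Euc 3) {t : ℝ}
    (ht : 0 < t) :
    HasDerivAt (fun s => kern η x s z)
      (-(3 * (t⁻¹)^4 * η (x + t⁻¹ • (z - x)) +
        (t⁻¹)^5 * fderiv ℝ η (x + t⁻¹ • (z - x)) (z - x))) t := by
  have hi : HasDerivAt (fun s : ℝ => s⁻¹) (-(t^2)⁻¹) t := hasDerivAt_inv ht.ne'
  have h2 : HasDerivAt (fun s : ℝ => x + s⁻¹ • (z - x)) ((-(t^2)⁻¹) • (z - x)) t :=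
    (hi.smul_const (z - x)).const_add x
  have h3 := ((hη.differentiable (by simp) (x + t⁻¹ • (z - x))).hasFDerivAt).comp_hasDerivAt t h2
  have h4 := (hi.pow 3).mul h3
  refine h4.congr_deriv ?_
  simp only [map_smul, smul_eq_mul, Function.comp]
  simp
  field_simp
  ring

lemma phi_fderiv {η : Euc 3 → ℝ} (hη : ContDiff ℝ (⊤ : ℕ∞) η) (x z : Euc 3) {t : ℝ}
    (ht : 0 < t) (i : Fin 3) :
    pd i (fun z => ((t⁻¹ * (z i - x i) * kern η x t z : ℝ) : ℂ)) z =
      ((t⁻¹ * kern η x t z + (t⁻¹)^5 * (z i - x i) *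
        fderiv ℝ η (x + t⁻¹ • (z - x)) (EuclideanSpace.single i (1:ℝ)) : ℝ) : ℂ) := by
  unfold pd
  set e : Euc 3 := EuclideanSpace.single i (1:ℝ) with he
  have hd : DifferentiableAt ℝ (fun z : Euc 3 => ((t⁻¹ * (z i - x i) * kern η x t z : ℝ) : ℂ)) z := by
    have := (kern_contDiff hη x t).differentiable (by simp)
    have h2 : DifferentiableAt ℝ (fun z : Euc 3 => t⁻¹ * (z i - x i) * kern η x t z) z := by fun_prop
    exact (Complex.ofRealCLM.differentiableAt).comp z h2
  rw [← hd.lineDeriv_eq_fderiv]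
  have hl : HasDerivAt (fun s : ℝ => z + s • e) e 0 := by
    simpa using ((hasDerivAt_id (0:ℝ)).smul_const e).const_add z
  have hl2 : HasDerivAt (fun s : ℝ => x + t⁻¹ • (z + s • e - x)) (t⁻¹ • e) 0 := 
    ((hl.sub_const x).const_smul t⁻¹).const_add x
  have h3 := ((hη.differentiable (by simp) (x + t⁻¹ • (z + (0:ℝ) • e - x))).hasFDerivAt).comp_hasDerivAt 0 hl2
  have h5 : HasDerivAt (fun s : ℝ => t⁻¹ * ((z + s • e) i - x i)) (t⁻¹ * 1) 0 := by
    have : HasDerivAt (fun s : ℝ => (z + s • e) i - x i) 1 0 := by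
      simpa [he] using ((hasDerivAt_id (0:ℝ)).const_add (z i)).sub_const (x i)
    exact this.const_mul _
  have h6 := (h5.mul (h3.const_mul ((t⁻¹)^3))).ofReal_comp
  rw [lineDeriv]
  refine (HasDerivAt.deriv h6).trans ?_
  congr 1
  simp [kern]
  ring

lemma div_identity {η : Euc 3 → ℝ} (hη : ContDiff ℝ (⊤ : ℕ∞) η) (x z : Euc 3) {t : ℝ}
    (ht : 0 < t) :
    ∑ i, pd i (fun z => ((t⁻¹ * (z i - x i) * kern η x t z : ℝ) : ℂ)) z =
      - ((-(3 * (t⁻¹)^4 * η (x + t⁻¹ • (z - x)) +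
        (t⁻¹)^5 * fderiv ℝ η (x + t⁻¹ • (z - x)) (z - x)) : ℝ) : ℂ) := by
  have hz : z - x = ∑ i, (z i - x i) • EuclideanSpace.single i (1:ℝ) := by
    ext j
    simp [Finset.sum_apply, Pi.single_apply]
  have e2 : fderiv ℝ η (x + t⁻¹ • (z - x)) (z - x) =
     ∑ i, (z i - x i) * fderiv ℝ η (x + t⁻¹ • (z - x)) (EuclideanSpace.single i (1:ℝ)) := by
    generalize fderiv ℝ η (x + t⁻¹ • (z - x)) = L
    rw [hz, map_sum]
    simp
  rw [Finset.sum_congr rfl (fun i _ => phi_fderiv hη x z ht i), ← Complex.ofReal_sum, e2,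
    ← Complex.ofReal_neg]
  congr 1
  rw [Fin.sum_univ_three, Fin.sum_univ_three]
  unfold kern
  ring

lemma phi_test {Ω : Set (Euc 3)} (hΩ : Convex ℝ Ω) {η : Euc 3 → ℝ}
    (hη : ContDiff ℝ (⊤ : ℕ∞) η)
    (hc : HasCompactSupport η) (hs : tsupport η ⊆ Ω) {x : Euc 3} (hx : x ∈ Ω)
    {t : ℝ} (ht : 0 < t) (ht1 : t ≤ 1) (i : Fin 3) :
    IsTestFun Ω (fun z => ((t⁻¹ * (z i - x i) * kern η x t z : ℝ) : ℂ)) := by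
  have hsub : tsupport (fun z : Euc 3 => ((t⁻¹ * (z i - x i) * kern η x t z : ℝ) : ℂ)) ⊆
      tsupport (kern η x t) := by
    apply closure_mono
    intro z hz h0
    apply hz
    simp [h0]
  refine ⟨?_, ?_, hsub.trans (kern_tsupport_sub hΩ hc hs hx ht ht1)⟩
  · have := kern_contDiff hη x t
    have h2 : ContDiff ℝ (⊤ : ℕ∞) (fun z : Euc 3 => t⁻¹ * (z i - x i) * kern η x t z) := by fun_prop
    exact Complex.ofRealCLM.contDiff.comp h2
  · exact HasCompactSupport.of_support_subset_isCompact (kern_hcs hc x ht).isCompact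
      ((subset_tsupport _).trans hsub)

lemma kern_supp_le {Ω : Set (Euc 3)} {η : Euc 3 → ℝ}
    (hs : tsupport η ⊆ Ω) {R : ℝ}
    (hR : ∀ x ∈ Ω, ∀ y ∈ Ω, ‖x - y‖ ≤ R) {x : Euc 3} (hx : x ∈ Ω)
    {t : ℝ} (ht : 0 < t) (z : Euc 3) :
    kern η x t z ≠ 0 → ‖z - x‖ ≤ t * R := by
  intro hz
  obtain ⟨y, hy, rfl⟩ := kern_tsupport_aux x ht hz
  have := hR y (hs hy) x hx
  simp [norm_smul, abs_of_pos ht]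
  gcongr

lemma F_hasDeriv {Ω : Set (Euc 3)} (hΩo : IsOpen Ω) (hΩ : Convex ℝ Ω)
    {η : Euc 3 → ℝ}
    (hη : ContDiff ℝ (⊤ : ℕ∞) η)
    (hc : HasCompactSupport η) (hs : tsupport η ⊆ Ω) {R : ℝ}
    (hR : ∀ x ∈ Ω, ∀ y ∈ Ω, ‖x - y‖ ≤ R) {x : Euc 3} (hx : x ∈ Ω)
    {t : ℝ} (ht : 0 < t) (ht1 : t ≤ 1) {u : Euc 3 → ℂ} {du : Fin 3 → Euc 3 → ℂ}
    (hu : IntegrableOn u Ω) (hw : ∀ i, IsWeakDeriv Ω i u (du i)) :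
    HasDerivAt (fun s => ∫ z in Ω, u z * (kern η x s z : ℂ))
      (∑ i, ∫ z in Ω, du i z * ((t⁻¹ * (z i - x i) * kern η x t z : ℝ) : ℂ)) t := by
  obtain ⟨H, hH⟩ := hη.continuous.bounded_above_of_compact_support hc
  have hcf : Continuous (fderiv ℝ η) := hη.continuous_fderiv (by simp)
  obtain ⟨H', hH'⟩ := hcf.bounded_above_of_compact_support (hc.fderiv (𝕜 := ℝ))
  have hH0 : 0 ≤ H := (norm_nonneg _).trans (hH 0)
  have hH'0 : 0 ≤ H' := (norm_nonneg _).trans (hH' 0)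
  have hR0 : 0 ≤ R := (norm_nonneg _).trans (hR x hx x hx)
  let k' : ℝ → Euc 3 → ℝ := fun s z => -(3 * (s⁻¹)^4 * η (x + s⁻¹ • (z - x)) +
        (s⁻¹)^5 * fderiv ℝ η (x + s⁻¹ • (z - x)) (z - x))
  have hk'c : ∀ s, Continuous (k' s) := by
    intro s
    have := hη.continuous
    have h2 : Continuous fun z : Euc 3 => (fderiv ℝ η (x + s⁻¹ • (z - x))) (z - x) := by
      fun_prop
    show Continuous fun z => -(3 * (s⁻¹)^4 * η (x + s⁻¹ • (z - x)) +
        (s⁻¹)^5 * fderiv ℝ η (x + s⁻¹ • (z - x)) (z - x))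
    fun_prop
  set B : ℝ := 3 * ((t/2)⁻¹)^4 * H + ((t/2)⁻¹)^5 * (H' * R) with hB
  have hmemu : AEStronglyMeasurable u (volume.restrict Ω) := hu.1
  have hkc : ∀ s, Continuous (kern η x s) := fun s => (kern_contDiff hη x s).continuous
  have key := hasDerivAt_integral_of_dominated_loc_of_deriv_le (μ := volume.restrict Ω) (𝕜 := ℝ)
    (F := fun s z => u z * (kern η x s z : ℂ)) (x₀ := t) (s := Ioi (t/2))
    (F' := fun s z => u z * (k' s z : ℂ)) (bound := fun z => ‖u z‖ * B)
    (Ioi_mem_nhds (by linarith))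
    (Eventually.of_forall fun s => hmemu.mul
      (Complex.continuous_ofReal.comp (hkc s)).aestronglyMeasurable)
    (by
      obtain ⟨M, hM⟩ := (hkc t).bounded_above_of_compact_support (kern_hcs hc x ht)
      refine Integrable.mul_bdd (c := M) hu
        (Complex.continuous_ofReal.comp (hkc t)).aestronglyMeasurable ?_
      exact Eventually.of_forall fun z => by simpa using hM z)
    (hmemu.mul (Complex.continuous_ofReal.comp (hk'c t)).aestronglyMeasurable)
    (by
      filter_upwards [ae_restrict_mem hΩo.measurableSet] with z hz s hs'
      have hs2 : t / 2 < s := hs'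
      have hs0 : 0 < s := by linarith
      have hinv : s⁻¹ ≤ (t/2)⁻¹ := by gcongr
      rw [norm_mul, Complex.norm_real]
      gcongr
      show ‖-(3 * (s⁻¹)^4 * η (x + s⁻¹ • (z - x)) +
        (s⁻¹)^5 * fderiv ℝ η (x + s⁻¹ • (z - x)) (z - x))‖ ≤ B
      rw [norm_neg]
      refine (norm_add_le _ _).trans ?_
      rw [norm_mul, norm_mul, norm_mul, norm_pow, norm_pow, norm_inv, Real.norm_of_nonneg hs0.le]
      simp only [Real.norm_ofNat]
      rw [hB]
      have h2 : ‖fderiv ℝ η (x + s⁻¹ • (z - x)) (z - x)‖ ≤ H' * R :=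
        (ContinuousLinearMap.le_opNorm _ _).trans (by gcongr; exact hH' _; exact hR z hz x hx)
      gcongr
      exact hH _)
    (hu.norm.mul_const B)
    (by
      refine Eventually.of_forall fun z s hs' => ?_
      have hs2 : t / 2 < s := hs'
      have hs0 : 0 < s := by linarith
      exact ((kern_hasDerivAt hη x z hs0).ofReal_comp).const_mul (u z))
  refine key.2.congr_deriv ?_
  have hi : ∀ i, IntegrableOn (fun z => u z * pd i (fun z => ((t⁻¹ * (z i - x i) * kern η x t z : ℝ) : ℂ)) z) Ω := by
    intro i
    obtain ⟨h1, h2, -⟩ := phi_test hΩ hη hc hs hx ht ht1 i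
    have hcc : Continuous (pd i (fun z => ((t⁻¹ * (z i - x i) * kern η x t z : ℝ) : ℂ))) := by
      unfold pd
      exact (h1.continuous_fderiv (by simp)).clm_apply continuous_const
    have hcs : HasCompactSupport (pd i (fun z => ((t⁻¹ * (z i - x i) * kern η x t z : ℝ) : ℂ))) := by
      unfold pd
      exact h2.fderiv_apply (𝕜 := ℝ) _
    obtain ⟨M, hM⟩ := hcc.bounded_above_of_compact_support hcs
    exact Integrable.mul_bdd (c := M) hu hcc.aestronglyMeasurable (Eventually.of_forall hM)
  have e1 : ∀ i, ∫ z in Ω, du i z * ((t⁻¹ * (z i - x i) * kern η x t z : ℝ) : ℂ) =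
      - ∫ z in Ω, u z * pd i (fun z => ((t⁻¹ * (z i - x i) * kern η x t z : ℝ) : ℂ)) z := by
    intro i
    rw [hw i _ (phi_test hΩ hη hc hs hx ht ht1 i), neg_neg]
  rw [Finset.sum_congr rfl (fun i _ => e1 i), Finset.sum_neg_distrib, ← integral_finsetSum _ (fun i _ => hi i),
    ← integral_neg]
  refine integral_congr_ae (Eventually.of_forall fun z => ?_)
  simp only
  rw [← Finset.mul_sum, div_identity hη x z ht, mul_neg, neg_neg]

lemma F_deriv_bound {Ω : Set (Euc 3)} {η : Euc 3 → ℝ}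
    (hs : tsupport η ⊆ Ω) {R H β : ℝ} (hβ : 0 ≤ β) (h0 : ∀ x, 0 ≤ η x) (hH : ∀ x, η x ≤ H)
    (hR : ∀ x ∈ Ω, ∀ y ∈ Ω, ‖x - y‖ ≤ R) (hR0 : 0 < R) {x : Euc 3} (hx : x ∈ Ω)
    {t : ℝ} (ht : 0 < t) {du : Fin 3 → Euc 3 → ℂ}
    {G : ℝ≥0∞} (hG : ∫⁻ z in Ω, (∑ i, ‖du i z‖ₑ) * ‖z - x‖ₑ ^ (-β) ≤ G) (hGt : G ≠ ⊤)
    (hdu : ∀ i, IntegrableOn (du i) Ω) :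
    ‖∑ i, ∫ z in Ω, du i z * ((t⁻¹ * (z i - x i) * kern η x t z : ℝ) : ℂ)‖ ≤
      t ^ (β - 3) * (R ^ (β + 1) * H * G.toReal) := by
  have hH0 : 0 ≤ H := (h0 0).trans (hH 0)
  have pw : ∀ i, ∀ z : Euc 3, z ≠ x → ‖(t⁻¹ * (z i - x i) * kern η x t z : ℝ)‖ₑ ≤
      ENNReal.ofReal (t ^ (β - 3) * (R ^ (β + 1) * H)) * ‖z - x‖ₑ ^ (-β) := by
    intro i z hz
    by_cases hk : kern η x t z = 0
    · simp [hk]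
    have hb := kern_supp_le hs hR hx ht z hk
    have hpos : 0 < ‖z - x‖ := norm_pos_iff.2 (sub_ne_zero.2 hz)
    rw [← ofReal_norm, ← ofReal_norm (z - x), ENNReal.ofReal_rpow_of_pos hpos,
      ← ENNReal.ofReal_mul (by positivity)]
    refine ENNReal.ofReal_le_ofReal ?_
    have h1 : ‖z i - x i‖ ≤ ‖z - x‖ := by
      simpa using PiLp.norm_apply_le (z - x) i
    have h2 : 1 ≤ ((t * R) / ‖z - x‖) ^ β := Real.one_le_rpow (by rw [le_div_iff₀ hpos]; simpa using hb) hβ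
    have h3 : ‖kern η x t z‖ ≤ (t⁻¹)^3 * H := by
      unfold kern
      rw [norm_mul, Real.norm_of_nonneg (h0 _), Real.norm_of_nonneg (by positivity)]
      gcongr
      exact hH _
    calc ‖t⁻¹ * (z i - x i) * kern η x t z‖ = t⁻¹ * ‖z i - x i‖ * ‖kern η x t z‖ := by
          rw [norm_mul, norm_mul, Real.norm_of_nonneg (by positivity)]
      _ ≤ t⁻¹ * (t * R) * ((t⁻¹)^3 * H) := by gcongr; exact h1.trans hb
      _ ≤ t⁻¹ * (t * R) * ((t⁻¹)^3 * H) * ((t * R) / ‖z - x‖) ^ β :=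
          le_mul_of_one_le_right (by positivity) h2
      _ = t ^ (β - 3) * (R ^ (β + 1) * H) * ‖z - x‖ ^ (-β) := by
          rw [Real.div_rpow (by positivity) hpos.le, Real.mul_rpow ht.le hR0.le, Real.rpow_sub ht,
            Real.rpow_add hR0, Real.rpow_neg hpos.le, Real.rpow_one]
          have : t ^ (3:ℝ) = t ^ 3 := by norm_cast
          rw [this]
          field_simp
  have h1 : ‖∑ i, ∫ z in Ω, du i z * ((t⁻¹ * (z i - x i) * kern η x t z : ℝ) : ℂ)‖ₑ ≤
      ENNReal.ofReal (t ^ (β - 3) * (R ^ (β + 1) * H)) * G := by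
    calc _ ≤ ∑ i, ‖∫ z in Ω, du i z * ((t⁻¹ * (z i - x i) * kern η x t z : ℝ) : ℂ)‖ₑ := enorm_sum_le _ _
      _ ≤ ∑ i, ∫⁻ z in Ω, ENNReal.ofReal (t ^ (β - 3) * (R ^ (β + 1) * H)) * (‖du i z‖ₑ * ‖z - x‖ₑ ^ (-β)) := by
          refine Finset.sum_le_sum fun i _ => (enorm_integral_le_lintegral_enorm _).trans ?_
          refine lintegral_mono_ae (ae_restrict_of_ae ?_)
          filter_upwards [Measure.ae_ne volume x] with z hz
          rw [enorm_mul]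
          have := pw i z hz
          calc _ = ‖du i z‖ₑ * ‖(t⁻¹ * (z i - x i) * kern η x t z : ℝ)‖ₑ := by
                congr 1
                rw [← ofReal_norm, ← ofReal_norm, Complex.norm_real]
            _ ≤ ‖du i z‖ₑ * (ENNReal.ofReal (t ^ (β - 3) * (R ^ (β + 1) * H)) * ‖z - x‖ₑ ^ (-β)) := by gcongr
            _ = _ := by ring
      _ = ENNReal.ofReal (t ^ (β - 3) * (R ^ (β + 1) * H)) * ∫⁻ z in Ω, (∑ i, ‖du i z‖ₑ) * ‖z - x‖ₑ ^ (-β) := by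
          have hm : ∀ i, AEMeasurable (fun z => ‖du i z‖ₑ * ‖z - x‖ₑ ^ (-β)) (volume.restrict Ω) := by
            intro i
            exact (hdu i).1.enorm.mul (by fun_prop)
          simp_rw [Finset.sum_mul]
          rw [lintegral_finsetSum' _ (fun i _ => hm i), Finset.mul_sum]
          refine Finset.sum_congr rfl fun i _ => ?_
          rw [lintegral_const_mul'' _ (hm i)]
      _ ≤ _ := by gcongr
  rw [← mul_assoc, ← toReal_enorm]
  refine (ENNReal.toReal_mono (by finiteness) h1).trans (le_of_eq ?_)
  rw [ENNReal.toReal_mul, ENNReal.toReal_ofReal (by positivity)]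

lemma F_tendsto {Ω : Set (Euc 3)} (hΩo : IsOpen Ω) (hΩ : Convex ℝ Ω)
    {η : Euc 3 → ℝ} (hη : ContDiff ℝ (⊤ : ℕ∞) η)
    (hc : HasCompactSupport η) (hs : tsupport η ⊆ Ω) {R H : ℝ}
    (h0 : ∀ x, 0 ≤ η x) (hH : ∀ x, η x ≤ H) (h1 : ∫ x, η x = 1)
    (hR : ∀ x ∈ Ω, ∀ y ∈ Ω, ‖x - y‖ ≤ R) (hR0 : 0 < R) {u : Euc 3 → ℂ}
    (hu : IntegrableOn u Ω) :
    ∀ᵐ x ∂(volume.restrict Ω), Tendsto (fun s => ∫ z in Ω, u z * (kern η x s z : ℂ)) (𝓝[>] 0) (𝓝 (u x)) := by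
  have hH0 : 0 ≤ H := (h0 0).trans (hH 0)
  have hf : Integrable (Ω.indicator u) := (integrable_indicator_iff hΩo.measurableSet).2 hu
  have hL := IsUnifLocDoublingMeasure.ae_tendsto_average_norm_sub volume hf.locallyIntegrable 1
  filter_upwards [ae_restrict_of_ae hL, ae_restrict_mem hΩo.measurableSet] with x hLx hx
  have hδ : Tendsto (fun t : ℝ => t * R) (𝓝[>] 0) (𝓝[>] 0) := by
    refine tendsto_nhdsWithin_iff.2 ⟨?_, ?_⟩
    · have : Tendsto (fun t : ℝ => t * R) (𝓝 0) (𝓝 (0 * R)) := tendsto_id.mul_const R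
      rw [zero_mul] at this
      exact this.mono_left nhdsWithin_le_nhds
    · filter_upwards [self_mem_nhdsWithin] with t ht
      exact mul_pos ht hR0
  have hlim := hLx (fun _ => x) (fun t => t * R) hδ (by
    filter_upwards [self_mem_nhdsWithin] with t ht
    have : 0 < t := ht
    simp; positivity)
  set ω : ℝ := (volume (Metric.ball (0 : Euc 3) 1)).toReal
  rw [tendsto_iff_norm_sub_tendsto_zero]
  have hlim2 := hlim.const_mul (H * R^3 * ω)
  rw [mul_zero] at hlim2
  refine squeeze_zero' (Eventually.of_forall fun _ => norm_nonneg _) ?_ hlim2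
  filter_upwards [self_mem_nhdsWithin, Ioc_mem_nhdsGT (zero_lt_one' ℝ)] with t ht ht1
  have ht0 : 0 < t := ht
  have hkc : Continuous (kern η x t) := (kern_contDiff hη x t).continuous
  have hki : Integrable (kern η x t) := hkc.integrable_of_hasCompactSupport (kern_hcs hc x ht0)
  have hk1 : ∫ z in Ω, (kern η x t z : ℂ) = 1 := by
    rw [integral_complex_ofReal, setIntegral_eq_integral_of_forall_compl_eq_zero, kern_integral h1 x ht0]
    · simp
    · intro z hz
      exact image_eq_zero_of_notMem_tsupport fun h => hz (kern_tsupport_sub hΩ hc hs hx ht0 ht1.2 h)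
  have hkb : ∀ z, ‖kern η x t z‖ ≤ (t⁻¹)^3 * H := by
    intro z
    unfold kern
    rw [norm_mul, Real.norm_of_nonneg (h0 _), Real.norm_of_nonneg (by positivity)]
    gcongr
    exact hH _
  have hI1 : IntegrableOn (fun z => u z * (kern η x t z : ℂ)) Ω :=
    Integrable.mul_bdd (c := (t⁻¹)^3 * H) hu
        (Complex.continuous_ofReal.comp hkc).aestronglyMeasurable
        (Eventually.of_forall fun z => by simpa using hkb z)
  have hI2 : IntegrableOn (fun z => u x * (kern η x t z : ℂ)) Ω :=
    (hki.ofReal.const_mul (u x)).integrableOn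
  have e1 : (∫ z in Ω, u z * (kern η x t z : ℂ)) - u x = ∫ z in Ω, (u z - u x) * (kern η x t z : ℂ) := by
    simp_rw [sub_mul]
    rw [integral_sub hI1 hI2, integral_const_mul, hk1, mul_one]
  have hIb : IntegrableOn (fun z => ‖Ω.indicator u z - Ω.indicator u x‖) (Metric.closedBall x (t * R)) := by
    refine (Integrable.sub hf.integrableOn ?_).norm
    exact integrableOn_const (measure_closedBall_lt_top.ne)
  rw [e1]
  calc ‖∫ z in Ω, (u z - u x) * (kern η x t z : ℂ)‖ ≤ ∫ z in Ω, ‖(u z - u x) * (kern η x t z : ℂ)‖ :=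
        norm_integral_le_integral_norm _
    _ ≤ ∫ z in Ω, (Metric.closedBall x (t * R)).indicator (fun z => ((t⁻¹)^3 * H) * ‖Ω.indicator u z - Ω.indicator u x‖) z := by
        refine setIntegral_mono_on ?_ ?_ hΩo.measurableSet ?_
        · have := (hI1.sub hI2).norm
          refine this.congr (Eventually.of_forall fun z => ?_)
          simp [sub_mul]
        · refine Integrable.integrableOn ?_
          rw [integrable_indicator_iff Metric.isClosed_closedBall.measurableSet]
          exact hIb.const_mul _
        · intro z hz
          rw [norm_mul, Complex.norm_real]
          by_cases hk : kern η x t z = 0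
          · rw [hk]; simp only [norm_zero, mul_zero]
            refine indicator_nonneg (fun z _ => by positivity) _
          · have := kern_supp_le hs hR hx ht0 z hk
            rw [indicator_of_mem (by simpa [dist_eq_norm] using this), indicator_of_mem hz, indicator_of_mem hx, mul_comm]
            gcongr
            exact hkb z
    _ ≤ ∫ z, (Metric.closedBall x (t * R)).indicator (fun z => ((t⁻¹)^3 * H) * ‖Ω.indicator u z - Ω.indicator u x‖) z := by
        refine setIntegral_le_integral ?_ (Eventually.of_forall fun z => indicator_nonneg (fun z _ => by positivity) _)
        rw [integrable_indicator_iff Metric.isClosed_closedBall.measurableSet]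
        exact hIb.const_mul _
    _ = ((t⁻¹)^3 * H) * ∫ z in Metric.closedBall x (t * R), ‖Ω.indicator u z - Ω.indicator u x‖ := by
        rw [integral_indicator Metric.isClosed_closedBall.measurableSet, integral_const_mul]
    _ = H * R^3 * ω * ⨍ z in Metric.closedBall x (t * R), ‖Ω.indicator u z - Ω.indicator u x‖ := by
        rw [setAverage_eq, Measure.real, Measure.addHaar_closedBall _ _ (by positivity)]
        have hω : ω ≠ 0 := (ENNReal.toReal_pos (Metric.measure_ball_pos volume _ one_pos).ne' measure_ball_lt_top.ne).ne'
        rw [ENNReal.toReal_mul, ENNReal.toReal_ofReal (by positivity)]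
        simp only [finrank_euclideanSpace, Fintype.card_fin, smul_eq_mul]
        change _ = H * R^3 * ω * (((t * R)^3 * ω)⁻¹ * _)
        field_simp

lemma pointwise_est {Ω : Set (Euc 3)} (hΩo : IsOpen Ω) (hΩ : Convex ℝ Ω)
    {η : Euc 3 → ℝ} (hη : ContDiff ℝ (⊤ : ℕ∞) η)
    (hc : HasCompactSupport η) (hs : tsupport η ⊆ Ω) {R H β : ℝ} (hβ : 2 < β)
    (h0 : ∀ x, 0 ≤ η x) (hH : ∀ x, η x ≤ H) (h1 : ∫ x, η x = 1)
    (hR : ∀ x ∈ Ω, ∀ y ∈ Ω, ‖x - y‖ ≤ R) (hR0 : 0 < R) {u : Euc 3 → ℂ}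
    {du : Fin 3 → Euc 3 → ℂ}
    (hu : IntegrableOn u Ω) (hdu : ∀ i, IntegrableOn (du i) Ω)
    (hw : ∀ i, IsWeakDeriv Ω i u (du i)) :
    ∀ᵐ x ∂(volume.restrict Ω), ‖u x - ∫ z in Ω, u z * (η z : ℂ)‖ₑ ≤
      ENNReal.ofReal (R ^ (β + 1) * H / (β - 2)) *
        ∫⁻ z in Ω, (∑ i, ‖du i z‖ₑ) * ‖z - x‖ₑ ^ (-β) := by
  have hH0 : 0 ≤ H := (h0 0).trans (hH 0)
  have hβ2 : 0 < β - 2 := by linarith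
  have hHpos : 0 < H := by
    rcases hH0.lt_or_eq with h | h
    · exact h
    · have : ∀ x, η x = 0 := fun x => le_antisymm (h ▸ hH x) (h0 x)
      simp [this] at h1
  filter_upwards [F_tendsto hΩo hΩ hη hc hs h0 hH h1 hR hR0 hu, ae_restrict_mem hΩo.measurableSet]
    with x hlim hx
  set G := ∫⁻ z in Ω, (∑ i, ‖du i z‖ₑ) * ‖z - x‖ₑ ^ (-β) with hG
  by_cases hGt : G = ⊤
  · rw [hGt, ENNReal.mul_top]
    · exact le_top
    · simp only [ne_eq, ENNReal.ofReal_eq_zero, not_le]; positivity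
  set F : ℝ → ℂ := fun s => ∫ z in Ω, u z * (kern η x s z : ℂ) with hF
  have hF1 : F 1 = ∫ z in Ω, u z * (η z : ℂ) := by simp [hF, kern]
  set K : ℝ := R ^ (β + 1) * H * G.toReal with hK
  have hK0 : 0 ≤ K := by positivity
  have hmv : ∀ ε ∈ Ioc (0:ℝ) 1, ‖F ε - F 1‖ ≤ K / (β - 2) := by
    intro ε hε
    have hd : ∀ s, 0 < s → s ≤ 1 → HasDerivAt F _ s := fun s hs0 hs1 =>
      F_hasDeriv hΩo hΩ hη hc hs hR hx hs0 hs1 hu hw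
    have hBd : ∀ s, 0 < s → HasDerivAt (fun s : ℝ => (s ^ (β - 2) - ε ^ (β - 2)) / (β - 2) * K)
        (s ^ (β - 3) * K) s := by
      intro s hs0
      have := (((Real.hasDerivAt_rpow_const (x := s) (p := β - 2) (Or.inl hs0.ne')).sub_const (ε ^ (β - 2))).div_const (β-2)).mul_const K
      refine this.congr_deriv ?_
      rw [show β - 2 - 1 = β - 3 by ring]
      field_simp
    have := image_norm_le_of_norm_deriv_right_le_deriv_boundary' (f := fun s => F s - F ε)
      (a := ε) (b := 1) (B := fun s : ℝ => (s ^ (β - 2) - ε ^ (β - 2)) / (β - 2) * K)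
      (B' := fun s => s ^ (β - 3) * K)
      (f' := fun t => ∑ i, ∫ z in Ω, du i z * ((t⁻¹ * (z i - x i) * kern η x t z : ℝ) : ℂ))
      (fun s hs' => ((hd s (hε.1.trans_le hs'.1) hs'.2).continuousAt.continuousWithinAt).sub continuousWithinAt_const)
      (fun s hs' => ((hd s (hε.1.trans_le hs'.1) hs'.2.le).sub_const _).hasDerivWithinAt)
      (by simp)
      (fun s hs' => (hBd s (hε.1.trans_le hs'.1)).continuousAt.continuousWithinAt)
      (fun s hs' => (hBd s (hε.1.trans_le hs'.1)).hasDerivWithinAt)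
      (fun s hs' => F_deriv_bound hs (by linarith) h0 hH hR hR0 hx (hε.1.trans_le hs'.1) le_rfl hGt hdu)
      (right_mem_Icc.2 hε.2)
    rw [norm_sub_rev]
    refine this.trans ?_
    simp only [Real.one_rpow]
    have : 0 ≤ ε ^ (β - 2) := Real.rpow_nonneg hε.1.le _
    calc (1 - ε ^ (β - 2)) / (β - 2) * K ≤ 1 / (β - 2) * K := by gcongr; linarith
      _ = _ := by ring
  have hfin : ‖u x - F 1‖ ≤ K / (β - 2) := by
    refine le_of_tendsto (hlim.sub_const (F 1)).norm ?_
    filter_upwards [Ioc_mem_nhdsGT (zero_lt_one' ℝ)] with ε hε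
    exact hmv ε hε
  rw [← hF1, ← ofReal_norm]
  calc ENNReal.ofReal ‖u x - F 1‖ ≤ ENNReal.ofReal (K / (β - 2)) := ENNReal.ofReal_le_ofReal hfin
    _ = ENNReal.ofReal (R ^ (β + 1) * H / (β - 2) * G.toReal) := by rw [hK]; congr 1; ring
    _ = _ := by rw [ENNReal.ofReal_mul (by positivity), ENNReal.ofReal_toReal hGt]

lemma young_aux {α : Type*} [MeasurableSpace α] {μ : Measure α} [SFinite μ]
    {g : α → ℝ≥0∞} (hg : AEMeasurable g μ) {κ : α → α → ℝ≥0∞}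
    (hκ : Measurable (Function.uncurry κ)) {N : ℝ≥0∞} {p : ℝ} (hp : 2 < p)
    (h1 : ∀ᵐ x ∂μ, ∫⁻ z, κ x z ∂μ ≤ N) (h2 : ∀ᵐ z ∂μ, ∫⁻ x, κ x z ∂μ ≤ N) :
    (∫⁻ x, (∫⁻ z, g z * κ x z ^ (1/2 + 1/p) ∂μ) ^ p ∂μ) ^ (1/p) ≤
      N ^ (1/2 + 1/p) * (∫⁻ z, g z ^ (2:ℝ) ∂μ) ^ ((1:ℝ)/2) := by
  have hp0 : 0 < p := by linarith
  have hp2 : 1/p < 1/2 := by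
    rw [div_lt_div_iff₀ hp0 two_pos]; linarith
  have hp1 : 0 < 1/p := by positivity
  set A := ∫⁻ z, g z ^ (2:ℝ) ∂μ with hA
  have hκx : ∀ x, Measurable (κ x) := fun x => hκ.of_uncurry_left
  have hold : ∀ᵐ x ∂μ, (∫⁻ z, g z * κ x z ^ (1/2 + 1/p) ∂μ) ^ p ≤
      (∫⁻ z, g z ^ (2:ℝ) * κ x z ∂μ) * (A ^ (p/2 - 1) * N ^ (p/2)) := by
    filter_upwards [h1] with x hx
    have hH := ENNReal.lintegral_prod_norm_pow_le (μ := μ) (Finset.univ : Finset (Fin 3))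
      (f := ![fun z => g z ^ (2:ℝ) * κ x z, fun z => g z ^ (2:ℝ), fun z => κ x z])
      (p := ![1/p, 1/2 - 1/p, 1/2]) (by
        intro i _
        have := hκx x
        fin_cases i
        · exact (hg.pow_const _).mul this.aemeasurable
        · exact hg.pow_const _
        · exact this.aemeasurable)
      (by simp [Fin.sum_univ_three]; norm_num)
      (by
        intro i _
        fin_cases i
        · simpa using hp1.le
        · simpa using hp2.le
        · simp)
    simp only [Fin.prod_univ_three] at hH
    simp only [Matrix.cons_val_zero, Matrix.cons_val_one, Matrix.cons_val] at hH
    have e : ∀ z, (g z ^ (2:ℝ) * κ x z) ^ (1/p) * (g z ^ (2:ℝ)) ^ (1/2 - 1/p) * κ x z ^ ((1:ℝ)/2) =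
        g z * κ x z ^ (1/2 + 1/p) := by
      intro z
      rw [ENNReal.mul_rpow_of_nonneg _ _ hp1.le, ← ENNReal.rpow_mul, ← ENNReal.rpow_mul,
        ENNReal.rpow_add_of_nonneg _ _ (by norm_num : (0:ℝ) ≤ 1/2) hp1.le]
      have : g z ^ (2 * (1/p)) * g z ^ (2 * (1/2 - 1/p)) = g z := by
        rw [← ENNReal.rpow_add_of_nonneg _ _ (by positivity) (by linarith)]
        rw [show 2 * (1/p) + 2 * (1/2 - 1/p) = 1 by ring, ENNReal.rpow_one]
      calc _ = (g z ^ (2 * (1/p)) * g z ^ (2 * (1/2 - 1/p))) * (κ x z ^ ((1:ℝ)/2) * κ x z ^ (1/p)) := by ring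
        _ = _ := by rw [this]
    simp_rw [e] at hH
    calc (∫⁻ z, g z * κ x z ^ (1/2 + 1/p) ∂μ) ^ p
        ≤ ((∫⁻ z, g z ^ (2:ℝ) * κ x z ∂μ) ^ (1/p) * A ^ (1/2 - 1/p) * N ^ ((1:ℝ)/2)) ^ p := by
          gcongr
          refine hH.trans ?_
          gcongr
      _ = _ := by
          rw [ENNReal.mul_rpow_of_nonneg _ _ hp0.le, ENNReal.mul_rpow_of_nonneg _ _ hp0.le,
            ← ENNReal.rpow_mul, ← ENNReal.rpow_mul, ← ENNReal.rpow_mul]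
          rw [show 1/p * p = 1 by field_simp, show (1/2 - 1/p) * p = p/2 - 1 by field_simp,
            show 1/2 * p = p/2 by ring, ENNReal.rpow_one, mul_assoc]
  have hm : AEMeasurable (Function.uncurry fun x z => g z ^ (2:ℝ) * κ x z) (μ.prod μ) := by
    exact ((hg.comp_snd).pow_const _).mul hκ.aemeasurable
  have hm' : AEMeasurable (fun x => ∫⁻ z, g z ^ (2:ℝ) * κ x z ∂μ) μ := hm.lintegral_prod_right'
  have hsw : ∫⁻ x, ∫⁻ z, g z ^ (2:ℝ) * κ x z ∂μ ∂μ ≤ A * N := by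
    rw [lintegral_lintegral_swap hm]
    have : ∀ z, ∫⁻ x, g z ^ (2:ℝ) * κ x z ∂μ = g z ^ (2:ℝ) * ∫⁻ x, κ x z ∂μ := fun z =>
      lintegral_const_mul _ hκ.of_uncurry_right
    simp_rw [this]
    calc _ ≤ ∫⁻ z, g z ^ (2:ℝ) * N ∂μ := by
          apply lintegral_mono_ae
          filter_upwards [h2] with z hz
          gcongr
      _ = _ := by rw [lintegral_mul_const'' _ (hg.pow_const _)]
  calc _ ≤ (∫⁻ x, (∫⁻ z, g z ^ (2:ℝ) * κ x z ∂μ) * (A ^ (p/2 - 1) * N ^ (p/2)) ∂μ) ^ (1/p) := by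
        gcongr ?_ ^ _
        exact lintegral_mono_ae hold
    _ ≤ ((A * N) * (A ^ (p/2 - 1) * N ^ (p/2))) ^ (1/p) := by
        gcongr ?_ ^ _
        rw [lintegral_mul_const'' _ hm']
        gcongr
    _ = (A ^ (p/2) * N ^ (p/2 + 1)) ^ (1/p) := by
        have e1 : A ^ (p/2) = A * A ^ (p/2 - 1) := by
          conv_lhs => rw [show p/2 = 1 + (p/2 - 1) by ring]
          rw [ENNReal.rpow_add_of_nonneg _ _ zero_le_one (by linarith), ENNReal.rpow_one]
        have e2 : N ^ (p/2 + 1) = N ^ (p/2) * N := by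
          rw [ENNReal.rpow_add_of_nonneg _ _ (by positivity) zero_le_one, ENNReal.rpow_one]
        rw [e1, e2]
        congr 1
        ring
    _ = _ := by
        rw [ENNReal.mul_rpow_of_nonneg _ _ hp1.le, ← ENNReal.rpow_mul, ← ENNReal.rpow_mul, mul_comm]
        congr 2
        · field_simp
        · field_simp

lemma sum_eLpNorm {μ : Measure (Euc 3)} {du : Fin 3 → Euc 3 → ℂ} {q : ℝ} (hq : 1 ≤ q)
    (hdu : ∀ i, AEStronglyMeasurable (du i) μ) :
    (∫⁻ z, (∑ i, ‖du i z‖ₑ) ^ q ∂μ) ^ (1/q) ≤ ∑ i, eLpNorm (du i) (ENNReal.ofReal q) μ := by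
  have hq0 : 0 < q := by linarith
  have h := eLpNorm_sum_le (s := (Finset.univ : Finset (Fin 3))) (p := ENNReal.ofReal q) (μ := μ) (f := fun i z => ‖du i z‖)
    (fun i _ => (hdu i).norm) (by rw [← ENNReal.ofReal_one]; exact ENNReal.ofReal_le_ofReal hq)
  simp only [eLpNorm_norm] at h
  refine le_trans (le_of_eq ?_) h
  rw [eLpNorm_eq_lintegral_rpow_enorm_toReal (by simpa using hq0) (by simp), ENNReal.toReal_ofReal hq0.le]
  congr 1
  refine lintegral_congr fun z => ?_
  congr 1
  rw [Finset.sum_apply, Real.enorm_of_nonneg (Finset.sum_nonneg fun i _ => norm_nonneg _),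
    ENNReal.ofReal_sum_of_nonneg (fun i _ => norm_nonneg _)]
  simp

lemma mean_bound {Ω : Set (Euc 3)} {η : Euc 3 → ℝ} (hηc : Continuous η) (hcs : HasCompactSupport η)
    {H : ℝ} (h0 : ∀ x, 0 ≤ η x) (hH : ∀ x, η x ≤ H) (h1 : ∫ x, η x = 1) {u : Euc 3 → ℂ}
    (hu : AEStronglyMeasurable u (volume.restrict Ω)) :
    ‖∫ z in Ω, u z * (η z : ℂ)‖ₑ ≤ ENNReal.ofReal (Real.sqrt H) * eLpNorm u 2 (volume.restrict Ω) := by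
  have hH0 : 0 ≤ H := (h0 0).trans (hH 0)
  refine (enorm_integral_le_lintegral_enorm _).trans ?_
  have hη2 : (∫⁻ z in Ω, (ENNReal.ofReal (η z)) ^ (2:ℝ)) ≤ ENNReal.ofReal H := by
    calc _ ≤ ∫⁻ z, (ENNReal.ofReal (η z)) ^ (2:ℝ) := setLIntegral_le_lintegral _ _
      _ ≤ ∫⁻ z, ENNReal.ofReal H * ENNReal.ofReal (η z) := by
          refine lintegral_mono fun z => ?_
          rw [show (2:ℝ) = 1 + 1 by norm_num, ENNReal.rpow_add_of_nonneg _ _ zero_le_one zero_le_one, ENNReal.rpow_one]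
          gcongr
          exact hH z
      _ = _ := by
          rw [lintegral_const_mul _ (by fun_prop), ← ofReal_integral_eq_lintegral_ofReal
            (hηc.integrable_of_hasCompactSupport hcs) (Eventually.of_forall h0), h1]
          simp
  have hh := ENNReal.lintegral_mul_le_Lp_mul_Lq (volume.restrict Ω) (p := 2) (q := 2)
    (by constructor <;> norm_num) (f := fun z => ‖u z‖ₑ) (g := fun z => ENNReal.ofReal (η z))
    hu.enorm (by fun_prop)
  have e : eLpNorm u 2 (volume.restrict Ω) = (∫⁻ z in Ω, ‖u z‖ₑ ^ (2:ℝ)) ^ ((1:ℝ)/2) := by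
    rw [eLpNorm_eq_lintegral_rpow_enorm_toReal (by simp) (by simp)]
    simp
  rw [e, mul_comm]
  calc _ = ∫⁻ z in Ω, ((fun z => ‖u z‖ₑ) * (fun z => ENNReal.ofReal (η z))) z := by
        refine lintegral_congr fun z => ?_
        rw [enorm_mul, Pi.mul_apply]
        congr 1
        rw [← ofReal_norm, Complex.norm_real, Real.norm_of_nonneg (h0 z)]
    _ ≤ _ := hh
    _ ≤ _ := by
        gcongr
        rw [Real.sqrt_eq_rpow, ← ENNReal.ofReal_rpow_of_nonneg hH0 (by norm_num)]
        gcongr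

lemma Lp_est {Ω : Set (Euc 3)} {β p : ℝ} (hp : 2 < p) {u : Euc 3 → ℂ} {du : Fin 3 → Euc 3 → ℂ} {m : ℂ} {c N : ℝ≥0∞}
    (hΩo : IsOpen Ω)
    (hu : AEStronglyMeasurable u (volume.restrict Ω))
    (hdu : ∀ i, AEStronglyMeasurable (du i) (volume.restrict Ω))
    (hpt : ∀ᵐ x ∂(volume.restrict Ω), ‖u x - m‖ₑ ≤ c *
        ∫⁻ z in Ω, (∑ i, ‖du i z‖ₑ) * ‖z - x‖ₑ ^ (-β))
    (hN : ∀ x ∈ Ω, ∫⁻ z in Ω, ‖z - x‖ₑ ^ (-(β / (1/2 + 1/p))) ≤ N) :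
    eLpNorm u (ENNReal.ofReal p) (volume.restrict Ω) ≤ ‖m‖ₑ * volume Ω ^ (1/p) +
      c * N ^ (1/2 + 1/p) * ∑ i, eLpNorm (du i) 2 (volume.restrict Ω) := by
  have hp0 : 0 < p := by linarith
  have hu1 : (fun x => u x) = (fun x => (u x - m)) + fun _ => m := by ext; simp
  have hP1 : 1 ≤ ENNReal.ofReal p := by rw [← ENNReal.ofReal_one]; exact ENNReal.ofReal_le_ofReal (by linarith)
  have hP0 : ENNReal.ofReal p ≠ 0 := by simpa using hp0
  have hr : 0 < 1/2 + 1/p := by positivity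
  calc eLpNorm u (ENNReal.ofReal p) (volume.restrict Ω) ≤
      eLpNorm (fun x => u x - m) (ENNReal.ofReal p) (volume.restrict Ω) +
      eLpNorm (fun _ => m) (ENNReal.ofReal p) (volume.restrict Ω) := by
        conv_lhs => rw [show u = (fun x => (u x - m)) + fun _ => m by ext; simp]
        exact eLpNorm_add_le (hu.sub aestronglyMeasurable_const) aestronglyMeasurable_const hP1
    _ ≤ c * N ^ (1/2 + 1/p) * ∑ i, eLpNorm (du i) 2 (volume.restrict Ω) + ‖m‖ₑ * volume Ω ^ (1/p) := by
        gcongr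
        · rw [eLpNorm_eq_lintegral_rpow_enorm_toReal hP0 (by simp), ENNReal.toReal_ofReal hp0.le]
          have hy := young_aux (μ := volume.restrict Ω) (g := fun z => ∑ i, ‖du i z‖ₑ)
            (Finset.aemeasurable_fun_sum _ fun i _ => (hdu i).enorm)
            (κ := fun x z => ‖z - x‖ₑ ^ (-(β / (1/2 + 1/p)))) (by unfold Function.uncurry; fun_prop) (N := N) hp
            (by filter_upwards [ae_restrict_mem hΩo.measurableSet] with x hx using hN x hx)
            (by 
              filter_upwards [ae_restrict_mem hΩo.measurableSet] with x hx
              simp_rw [fun z => enorm_sub_rev x z]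
              exact hN x hx)
          have hs := sum_eLpNorm (q := 2) (by norm_num) hdu
          rw [show ENNReal.ofReal 2 = 2 by simp] at hs
          have ek : ∀ x z : Euc 3, (‖z - x‖ₑ ^ (-(β / (1/2 + 1/p)))) ^ (1/2 + 1/p) = ‖z - x‖ₑ ^ (-β) := by
            intro x z
            rw [← ENNReal.rpow_mul]
            congr 1
            field_simp
          simp_rw [ek] at hy
          calc _ ≤ (∫⁻ x in Ω, (c * ∫⁻ z in Ω, (∑ i, ‖du i z‖ₑ) * ‖z - x‖ₑ ^ (-β)) ^ p) ^ (1/p) := by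
                gcongr ?_ ^ _
                apply lintegral_mono_ae
                filter_upwards [hpt] with x hx
                gcongr
            _ ≤ c * (∫⁻ x in Ω, (∫⁻ z in Ω, (∑ i, ‖du i z‖ₑ) * ‖z - x‖ₑ ^ (-β)) ^ p) ^ (1/p) := by
                simp_rw [ENNReal.mul_rpow_of_nonneg _ _ hp0.le]
                rw [lintegral_const_mul'', ENNReal.mul_rpow_of_nonneg _ _ (by positivity), ← ENNReal.rpow_mul,
                  show p * (1/p) = 1 by field_simp, ENNReal.rpow_one]
                refine AEMeasurable.pow_const ?_ _
                have hgm : AEMeasurable (fun z => ∑ i, ‖du i z‖ₑ) (volume.restrict Ω) :=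
                  Finset.aemeasurable_fun_sum _ fun i _ => (hdu i).enorm
                have : AEMeasurable (fun q : Euc 3 × Euc 3 => (∑ i, ‖du i q.2‖ₑ) * ‖q.2 - q.1‖ₑ ^ (-β))
                    ((volume.restrict Ω).prod (volume.restrict Ω)) :=
                  (hgm.comp_snd).mul (by fun_prop)
                exact this.lintegral_prod_right'
            _ ≤ c * (N ^ (1/2 + 1/p) * ∑ i, eLpNorm (du i) 2 (volume.restrict Ω)) := by
                gcongr
                exact hy.trans (by gcongr)
            _ = _ := by ring
        · rw [eLpNorm_const' _ hP0 (by simp), ENNReal.toReal_ofReal hp0.le]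
          simp
    _ = _ := by ring

lemma Linf_est {Ω : Set (Euc 3)} {β : ℝ} {u : Euc 3 → ℂ} {du : Fin 3 → Euc 3 → ℂ} {m : ℂ} {c N : ℝ≥0∞}
    (hΩo : IsOpen Ω)
    (hdu : ∀ i, AEStronglyMeasurable (du i) (volume.restrict Ω))
    (hpt : ∀ᵐ x ∂(volume.restrict Ω), ‖u x - m‖ₑ ≤ c *
        ∫⁻ z in Ω, (∑ i, ‖du i z‖ₑ) * ‖z - x‖ₑ ^ (-β))
    (hN : ∀ x ∈ Ω, ∫⁻ z in Ω, ‖z - x‖ₑ ^ (-(β * (4/3))) ≤ N) :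
    eLpNorm u ⊤ (volume.restrict Ω) ≤ ‖m‖ₑ +
      c * N ^ ((3:ℝ)/4) * ∑ i, eLpNorm (du i) (ENNReal.ofReal 4) (volume.restrict Ω) := by
  rw [eLpNorm_exponent_top, eLpNormEssSup]
  refine essSup_le_of_ae_le _ ?_
  filter_upwards [hpt, ae_restrict_mem hΩo.measurableSet] with x hx hxΩ
  have h1 : ‖u x‖ₑ ≤ ‖m‖ₑ + ‖u x - m‖ₑ := by
    calc ‖u x‖ₑ = ‖m + (u x - m)‖ₑ := by congr 1; ring
      _ ≤ _ := enorm_add_le _ _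
  refine h1.trans ?_
  gcongr
  refine hx.trans ?_
  rw [mul_assoc]
  gcongr
  have hh := ENNReal.lintegral_mul_le_Lp_mul_Lq (volume.restrict Ω) (p := 4) (q := 4/3)
    (by constructor <;> norm_num) (f := fun z => ∑ i, ‖du i z‖ₑ) (g := fun z => ‖z - x‖ₑ ^ (-β))
    (Finset.aemeasurable_fun_sum _ fun i _ => (hdu i).enorm) (by fun_prop)
  refine (le_trans (le_of_eq ?_) hh).trans ?_
  · rfl
  · rw [mul_comm]
    have hs := sum_eLpNorm (q := 4) (by norm_num) hdu
    gcongr ?_ * ?_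
    simp_rw [← ENNReal.rpow_mul, neg_mul]
    rw [show (1:ℝ) / (4/3) = 3/4 by norm_num]
    gcongr
    exact hN x hxΩ

lemma sob_pt {Ω : Set (Euc 3)} (hΩo : IsOpen Ω) (hΩb : Bornology.IsBounded Ω)
    (hΩ : Convex ℝ Ω) (hne : Ω.Nonempty) {R β : ℝ} (hβ : 2 < β)
    (hR : ∀ x ∈ Ω, ∀ y ∈ Ω, ‖x - y‖ ≤ R) (hR0 : 0 < R) {u : Euc 3 → ℂ}
    {du : Fin 3 → Euc 3 → ℂ} (hu : MemLp u 2 (volume.restrict Ω))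
    (hdu : ∀ i, IntegrableOn (du i) Ω) (hw : ∀ i, IsWeakDeriv Ω i u (du i)) :
    ∃ m : ℂ, ‖m‖ₑ ≤ ENNReal.ofReal (Real.sqrt (2 / (volume Ω).toReal)) * eLpNorm u 2 (volume.restrict Ω) ∧
      ∀ᵐ x ∂(volume.restrict Ω), ‖u x - m‖ₑ ≤
        ENNReal.ofReal (R ^ (β + 1) * (2 / (volume Ω).toReal) / (β - 2)) *
        ∫⁻ z in Ω, (∑ i, ‖du i z‖ₑ) * ‖z - x‖ₑ ^ (-β) := by
  obtain ⟨η, hη, hc, hs, h0, hH, h1⟩ := exists_eta Ω hΩo hΩb hne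
  haveI : IsFiniteMeasure (volume.restrict Ω) := ⟨by simpa using hΩb.measure_lt_top⟩
  have hui : IntegrableOn u Ω := hu.integrable (by norm_num)
  exact ⟨_, mean_bound hη.continuous hc h0 hH h1 hu.1,
    pointwise_est hΩo hΩ hη hc hs hβ h0 hH h1 hR hR0 hui hdu hw⟩

lemma diam_bd {Ω : Set (Euc 3)} (hΩb : Bornology.IsBounded Ω) :
    ∀ x ∈ Ω, ∀ y ∈ Ω, ‖x - y‖ ≤ Metric.diam Ω := fun x hx y hy => by
  rw [← dist_eq_norm]; exact Metric.dist_le_diam_of_mem hΩb hx hy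

lemma riesz_sub {Ω : Set (Euc 3)} {R R' a : ℝ} (hRR : R < R')
    (hR : ∀ x ∈ Ω, ∀ y ∈ Ω, ‖x - y‖ ≤ R) {N : ℝ≥0∞}
    (hN : ∀ x : Euc 3, ∫⁻ z in Metric.ball x R', (‖z - x‖ₑ ^ (-a)) ≤ N) :
    ∀ x ∈ Ω, ∫⁻ z in Ω, ‖z - x‖ₑ ^ (-a) ≤ N := by
  intro x hx
  refine le_trans (lintegral_mono_set ?_) (hN x)
  intro z hz
  rw [mem_ball_iff_norm]
  exact (hR z hz x hx).trans_lt hRR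

lemma memLp_of_w12 {Ω : Set (Euc 3)} (hΩo : IsOpen Ω) (hΩb : Bornology.IsBounded Ω)
    (hΩ : Convex ℝ Ω) (hne : Ω.Nonempty) {p : ℝ} (hp2 : 2 < p) (hp6 : p < 6) {u : Euc 3 → ℂ}
    {du : Fin 3 → Euc 3 → ℂ} (hu : MemLp u 2 (volume.restrict Ω))
    (hdu : ∀ i, MemLp (du i) 2 (volume.restrict Ω)) (hw : ∀ i, IsWeakDeriv Ω i u (du i)) :
    MemLp u (ENNReal.ofReal p) (volume.restrict Ω) := by
  haveI : IsFiniteMeasure (volume.restrict Ω) := ⟨by simpa using hΩb.measure_lt_top⟩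
  have hp0 : 0 < p := by linarith
  have h6 : 1/6 < 1/p := by rw [div_lt_div_iff₀ (by norm_num) hp0]; linarith
  set β : ℝ := (7/2 + 3 * (1/p)) / 2 with hβd
  have hβ : 2 < β := by rw [hβd]; linarith
  have hr : 0 < 1/2 + 1/p := by positivity
  have ha : β / (1/2 + 1/p) < 3 := by rw [div_lt_iff₀ hr, hβd]; linarith
  have hR : ∀ x ∈ Ω, ∀ y ∈ Ω, ‖x - y‖ ≤ Metric.diam Ω + 1 := fun x hx y hy =>
    (diam_bd hΩb x hx y hy).trans (by linarith)
  have hd0 : 0 ≤ Metric.diam Ω := Metric.diam_nonneg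
  obtain ⟨N, hNt, hN⟩ := riesz_int (β / (1/2 + 1/p)) ha (Metric.diam Ω + 2)
  have hN' := riesz_sub (by linarith) hR hN
  obtain ⟨m, hm, hpt⟩ := sob_pt hΩo hΩb hΩ hne hβ hR (by linarith) hu
    (fun i => (hdu i).integrable (by norm_num)) hw
  refine ⟨hu.1, (Lp_est hp2 hΩo hu.1 (fun i => (hdu i).1) hpt hN').trans_lt ?_⟩
  have h1 : volume Ω ≠ ⊤ := hΩb.measure_lt_top.ne
  have h2 : ∑ i, eLpNorm (du i) 2 (volume.restrict Ω) ≠ ⊤ :=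
    (ENNReal.sum_lt_top.2 fun i _ => (hdu i).2).ne
  have h3 : volume Ω ^ (1/p) ≠ ⊤ := ENNReal.rpow_ne_top_of_nonneg (by positivity) h1
  have h4 : N ^ (1/2 + 1/p) ≠ ⊤ := ENNReal.rpow_ne_top_of_nonneg hr.le hNt
  finiteness

lemma weak01 {Ω : Set (Euc 3)} (U : SobFun 3 Ω 2) (i : Fin 3) : IsWeakDeriv Ω i U.u (U.d1 i) := by
  have h := U.weak 0 (by norm_num) (fun i => i.elim0) i
  have e : (Fin.cons i (fun i => i.elim0) : Fin (0+1) → Fin 3) = fun _ => i := by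
    funext k
    refine Fin.cases rfl (fun j => j.elim0) k
  rw [e] at h
  exact h

/-- second derivatives -/
def d2 {Ω : Set (Euc 3)} (U : SobFun 3 Ω 2) (i j : Fin 3) : Euc 3 → ℂ :=
  U.D 2 (Fin.cons j (fun _ => i))

lemma weak12 {Ω : Set (Euc 3)} (U : SobFun 3 Ω 2) (i j : Fin 3) :
    IsWeakDeriv Ω j (U.d1 i) (d2 U i j) :=
  U.weak 1 (by norm_num) (fun _ => i) j

lemma mem0 {Ω : Set (Euc 3)} (U : SobFun 3 Ω 2) : MemLp U.u 2 (volume.restrict Ω) :=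
  U.mem 0 (by norm_num) _

lemma mem1 {Ω : Set (Euc 3)} (U : SobFun 3 Ω 2) (i : Fin 3) : MemLp (U.d1 i) 2 (volume.restrict Ω) :=
  U.mem 1 (by norm_num) _

lemma mem2 {Ω : Set (Euc 3)} (U : SobFun 3 Ω 2) (i j : Fin 3) : MemLp (d2 U i j) 2 (volume.restrict Ω) :=
  U.mem 2 (by norm_num) _

lemma sobNorm_sq {Ω : Set (Euc 3)} (U : SobFun 3 Ω 2) :
    SobNormInt U ^ 2 = L2N Ω U.u ^ 2 + ∑ i, L2N Ω (U.d1 i) ^ 2 + ∑ i, ∑ j, L2N Ω (d2 U i j) ^ 2 := by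
  unfold SobNormInt
  rw [Real.sq_sqrt (by positivity)]
  rw [Finset.sum_range_succ, Finset.sum_range_succ, Finset.sum_range_one]
  congr 1
  · congr 1
    · rw [Fintype.sum_unique]
      congr 3
    · rw [← (Equiv.funUnique (Fin 1) (Fin 3)).symm.sum_comp]
      rfl
  · rw [← (finTwoArrowEquiv (Fin 3)).symm.sum_comp, Fintype.sum_prod_type, Finset.sum_comm]
    refine Finset.sum_congr rfl fun i _ => Finset.sum_congr rfl fun j _ => ?_
    congr 3
    funext k
    fin_cases k <;> rfl

lemma sobNorm_nonneg {Ω : Set (Euc 3)} (U : SobFun 3 Ω 2) : 0 ≤ SobNormInt U := Real.sqrt_nonneg _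

lemma part1_mem {Ω : Set (Euc 3)} (hΩo : IsOpen Ω) (hΩb : Bornology.IsBounded Ω)
    (hΩc : Convex ℝ Ω) (hne : Ω.Nonempty)
    (p : ℝ) (hp3 : 3 < p) (hp6 : p < 6)
    (C2p Cpinf : ℝ) (hC2p0 : 0 ≤ C2p) (hCpinf0 : 0 ≤ Cpinf)
    (hC2p : ∀ U : W1Fun 3 Ω 2, LpN Ω p U.u ≤ C2p * W1Fun.norm U)
    (hCpinf : ∀ U : W1Fun 3 Ω p, LinfN Ω U.u ≤ Cpinf * W1Fun.norm U) (U : SobFun 3 Ω 2) :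
    LinfN Ω U.u ≤ ((2 : ℝ) ^ (1/p) * C2p * Cpinf) * SobNormInt U := by
  have e2 : ENNReal.ofReal 2 = 2 := by simp
  have hp0 : 0 < p := by linarith
  have hS := sobNorm_nonneg U
  have hsq := sobNorm_sq U
  set S := SobNormInt U
  let W : W1Fun 3 Ω p := ⟨U.u, U.d1,
    memLp_of_w12 hΩo hΩb hΩc hne (by linarith) hp6 (mem0 U) (mem1 U) (weak01 U),
    fun i => memLp_of_w12 hΩo hΩb hΩc hne (by linarith) hp6 (mem1 U i) (mem2 U i) (weak12 U i),
    weak01 U⟩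
  let W0 : W1Fun 3 Ω 2 := ⟨U.u, U.d1, by rw [e2]; exact mem0 U, fun i => by rw [e2]; exact mem1 U i, weak01 U⟩
  let W1 : Fin 3 → W1Fun 3 Ω 2 := fun i => ⟨U.d1 i, d2 U i, by rw [e2]; exact mem1 U i, fun j => by rw [e2]; exact mem2 U i j, weak12 U i⟩
  have eN : ∀ V : W1Fun 3 Ω 2, 0 ≤ V.norm ∧ V.norm ^ 2 = L2N Ω V.u ^ 2 + ∑ i, L2N Ω (V.du i) ^ 2 := by
    intro V
    have hL : ∀ f, LpN Ω 2 f = L2N Ω f := fun f => by rw [LpN, L2N, e2]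
    have hpos : 0 ≤ L2N Ω V.u ^ 2 + ∑ i, L2N Ω (V.du i) ^ 2 := by positivity
    have : V.norm = Real.sqrt (L2N Ω V.u ^ 2 + ∑ i, L2N Ω (V.du i) ^ 2) := by
      unfold W1Fun.norm
      simp only [hL, Real.rpow_two]
      rw [Real.sqrt_eq_rpow]
    rw [this]
    exact ⟨Real.sqrt_nonneg _, Real.sq_sqrt hpos⟩
  have n0 := eN W0
  have n1 := fun i => eN (W1 i)
  have hn0 : W0.norm ≤ S := by
    refine abs_le_of_sq_le_sq' ?_ hS |>.2
    rw [n0.2, hsq]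
    have : 0 ≤ ∑ i, ∑ j, L2N Ω (d2 U i j) ^ 2 := by positivity
    show L2N Ω U.u ^ 2 + ∑ i, L2N Ω (U.d1 i) ^ 2 ≤ _
    linarith
  have hn1 : ∑ i, (W1 i).norm ^ 2 ≤ S ^ 2 := by
    rw [Finset.sum_congr rfl (fun i _ => (n1 i).2), hsq, Finset.sum_add_distrib]
    show ∑ i, L2N Ω (U.d1 i) ^ 2 + ∑ i, ∑ j, L2N Ω (d2 U i j) ^ 2 ≤ _
    have : 0 ≤ L2N Ω U.u ^ 2 := by positivity
    linarith
  have hn1i : ∀ i, (W1 i).norm ≤ S := by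
    intro i
    refine abs_le_of_sq_le_sq' ?_ hS |>.2
    exact (Finset.single_le_sum (f := fun i => (W1 i).norm ^ 2) (fun i _ => sq_nonneg _) (Finset.mem_univ i)).trans hn1
  have hpsplit : ∀ a : ℝ, 0 ≤ a → a ^ p = a ^ 2 * a ^ (p - 2) := by
    intro a ha
    rw [← Real.rpow_two, ← Real.rpow_add_of_nonneg ha (by norm_num) (by linarith)]
    congr 1
    ring
  have hn1p : ∑ i, (W1 i).norm ^ p ≤ S ^ p := by
    calc ∑ i, (W1 i).norm ^ p ≤ ∑ i, (W1 i).norm ^ 2 * S ^ (p - 2) := by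
          refine Finset.sum_le_sum fun i _ => ?_
          rw [hpsplit _ (n1 i).1]
          have := (n1 i).1
          gcongr
          · linarith
          · exact hn1i i
      _ = (∑ i, (W1 i).norm ^ 2) * S ^ (p - 2) := by rw [Finset.sum_mul]
      _ ≤ S ^ 2 * S ^ (p - 2) := by gcongr
      _ = S ^ p := (hpsplit S hS).symm
  have hLp0 : ∀ f, 0 ≤ LpN Ω p f := fun f => ENNReal.toReal_nonneg
  have hWn : W.norm ≤ (2 : ℝ) ^ (1/p) * C2p * S := by
    have : (LpN Ω p U.u)^p + ∑ i, (LpN Ω p (U.d1 i))^p ≤ 2 * (C2p ^ p * S ^ p) := by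
      have a0 : (LpN Ω p U.u)^p ≤ C2p ^ p * S ^ p := by
        rw [← Real.mul_rpow hC2p0 hS]
        have := (hC2p W0).trans (mul_le_mul_of_nonneg_left hn0 hC2p0)
        exact Real.rpow_le_rpow (hLp0 _) this hp0.le
      have a1 : ∑ i, (LpN Ω p (U.d1 i))^p ≤ C2p ^ p * S ^ p := by
        calc _ ≤ ∑ i, C2p ^ p * (W1 i).norm ^ p := by
              refine Finset.sum_le_sum fun i _ => ?_
              rw [← Real.mul_rpow hC2p0 (n1 i).1]
              exact Real.rpow_le_rpow (hLp0 _) (hC2p (W1 i)) hp0.le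
          _ = C2p ^ p * ∑ i, (W1 i).norm ^ p := by rw [Finset.mul_sum]
          _ ≤ _ := by gcongr
      linarith
    have hpos : 0 ≤ (LpN Ω p U.u)^p + ∑ i, (LpN Ω p (U.d1 i))^p :=
      add_nonneg (Real.rpow_nonneg (hLp0 _) _) (Finset.sum_nonneg fun i _ => Real.rpow_nonneg (hLp0 _) _)
    calc W.norm = ((LpN Ω p U.u)^p + ∑ i, (LpN Ω p (U.d1 i))^p) ^ (1/p) := rfl
      _ ≤ (2 * (C2p ^ p * S ^ p)) ^ (1/p) := Real.rpow_le_rpow hpos this (by positivity)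
      _ = _ := by
        rw [← Real.mul_rpow hC2p0 hS, Real.mul_rpow (by norm_num) (by positivity), ← Real.rpow_mul (by positivity),
          show p * (1/p) = 1 by field_simp, Real.rpow_one, mul_assoc]
  calc LinfN Ω U.u ≤ Cpinf * W.norm := hCpinf W
    _ ≤ Cpinf * ((2 : ℝ) ^ (1/p) * C2p * S) := by gcongr
    _ = _ := by ring

/-- the constant function as a Sobolev function -/
def constSob {Ω : Set (Euc 3)} (hΩb : Bornology.IsBounded Ω) : SobFun 3 Ω 2 where
  D := fun j _ => if j = 0 then (fun _ => 1) else (fun _ => 0)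
  mem := by
    intro j _ v
    haveI : IsFiniteMeasure (volume.restrict Ω) := ⟨by simpa using hΩb.measure_lt_top⟩
    unfold MemL2
    split_ifs
    · exact memLp_const _
    · exact memLp_const _
  weak := by
    intro j _ v i φ hφ
    obtain ⟨h1, h2, h3⟩ := hφ
    rcases Nat.eq_zero_or_pos j with h | h
    · subst h
      simp only [if_true, one_mul, Nat.add_eq_zero_iff, one_ne_zero, and_false, if_false, zero_mul, integral_zero, neg_zero]
      have hcont : Continuous (pd i φ) := (h1.continuous_fderiv (by simp)).clm_apply continuous_const
      have hcs : HasCompactSupport (pd i φ) := h2.fderiv_apply (𝕜 := ℝ) _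
      rw [setIntegral_eq_integral_of_forall_compl_eq_zero]
      · have := integral_mul_fderiv_eq_neg_fderiv_mul_of_integrable (μ := (volume : Measure (Euc 3)))
          (f := fun _ => (1:ℂ)) (g := φ) (v := EuclideanSpace.single i (1:ℝ)) (by simp)
          (by
            have h := hcont.integrable_of_hasCompactSupport (μ := volume) hcs
            simp only [one_mul]
            exact h)
          (by simpa using h1.continuous.integrable_of_hasCompactSupport h2)
          (by simp) (fun x _ => h1.differentiable (by simp) x)
        simpa [pd] using this
      · intro x hx
        have : x ∉ tsupport φ := fun h => hx (h3 h)
        unfold pd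
        rw [fderiv_of_notMem_tsupport (𝕜 := ℝ) this]
        rfl
    · have : j ≠ 0 := h.ne'
      simp [this]

lemma lower_bd {Ω : Set (Euc 3)} (hΩo : IsOpen Ω) (hΩb : Bornology.IsBounded Ω) (hne : Ω.Nonempty)
    {C0 : ℝ} (hC0 : 0 ≤ C0) (hmem : ∀ U : SobFun 3 Ω 2, LinfN Ω U.u ≤ C0 * SobNormInt U) :
    1 / Real.sqrt ((volume Ω).toReal) ≤ CS2 Ω ∧ CS2 Ω ≤ C0 := by
  have hpos : 0 < volume Ω := hΩo.measure_pos volume hne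
  have hfin : volume Ω ≠ ⊤ := hΩb.measure_lt_top.ne
  have hVpos : 0 < (volume Ω).toReal := ENNReal.toReal_pos hpos.ne' hfin
  refine ⟨le_csInf ⟨C0, hC0, hmem⟩ ?_, csInf_le ⟨0, fun x hx => hx.1⟩ ⟨hC0, hmem⟩⟩
  rintro C ⟨hC, hCU⟩
  have h := hCU (constSob hΩb)
  have hμ : volume.restrict Ω ≠ 0 := by
    rw [Ne, Measure.restrict_eq_zero]; exact hpos.ne'
  have hL : LinfN Ω (constSob hΩb).u = 1 := by
    show (eLpNorm (fun _ => (1:ℂ)) ⊤ (volume.restrict Ω)).toReal = 1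
    rw [eLpNorm_const _ (by simp) hμ]
    simp
  have hS : SobNormInt (constSob hΩb) = Real.sqrt ((volume Ω).toReal) := by
    have hsq := sobNorm_sq (constSob hΩb)
    have z1 : ∀ i, L2N Ω ((constSob hΩb).d1 i) = 0 := by
      intro i
      show (eLpNorm (fun _ => (0:ℂ)) 2 (volume.restrict Ω)).toReal = 0
      simp
    have z2 : ∀ i j, L2N Ω (d2 (constSob hΩb) i j) = 0 := by
      intro i j
      show (eLpNorm (fun _ => (0:ℂ)) 2 (volume.restrict Ω)).toReal = 0
      simp
    have z0 : L2N Ω (constSob hΩb).u = Real.sqrt ((volume Ω).toReal) := by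
      show (eLpNorm (fun _ => (1:ℂ)) 2 (volume.restrict Ω)).toReal = _
      rw [eLpNorm_const _ (by simp) hμ, Real.sqrt_eq_rpow, ENNReal.toReal_mul, ← ENNReal.toReal_rpow]
      simp
    simp only [z0, z1, z2] at hsq
    have : SobNormInt (constSob hΩb) ^ 2 = Real.sqrt ((volume Ω).toReal) ^ 2 := by
      rw [hsq]; simp
    exact (sq_eq_sq₀ (sobNorm_nonneg _) (Real.sqrt_nonneg _)).1 this
  rw [hL, hS] at h
  rw [div_le_iff₀ (Real.sqrt_pos.2 hVpos)]
  exact h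

lemma part2_arith {V κ S : ℝ} (hV : 0 < V) (hκ : 0 ≤ κ) (hS : 0 ≤ S) (h : κ * V ^ ((1:ℝ)/4) ≤ 1/10) :
    Real.sqrt (2 / V) * S + κ * (3 * (Real.sqrt (2 / V) * S * V ^ ((1:ℝ)/4) + κ * (3 * S))) ≤
      (2 : ℝ) ^ ((3:ℝ)/2) / Real.sqrt V * S := by
  set w := V ^ ((1:ℝ)/4) with hw
  have hw0 : 0 < w := Real.rpow_pos_of_pos hV _
  have hVw : Real.sqrt V = w ^ 2 := by
    rw [Real.sqrt_eq_rpow, hw, ← Real.rpow_mul_natCast hV.le]; norm_num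
  have h2 : (2 : ℝ) ^ ((3:ℝ)/2) = 2 * Real.sqrt 2 := by
    rw [Real.sqrt_eq_rpow, show (3:ℝ)/2 = 1 + 1/2 by norm_num, Real.rpow_add (by norm_num), Real.rpow_one]
  rw [Real.sqrt_div (by norm_num), hVw, h2]
  obtain ⟨q, hq⟩ : ∃ q, q = κ * w := ⟨_, rfl⟩
  have hκq : κ = q / w := by rw [hq]; field_simp
  have hq0 : 0 ≤ q := by rw [hq]; positivity
  rw [← hq] at h
  have hs : 1 ≤ Real.sqrt 2 := by rw [Real.one_le_sqrt]; norm_num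
  rw [hκq]
  have key : Real.sqrt 2 + 3 * q * Real.sqrt 2 + 9 * q ^ 2 ≤ 2 * Real.sqrt 2 := by nlinarith
  calc _ = (Real.sqrt 2 + 3 * q * Real.sqrt 2 + 9 * q ^ 2) * (S / w ^ 2) := by field_simp; ring
    _ ≤ (2 * Real.sqrt 2) * (S / w ^ 2) := by gcongr
    _ = _ := by ring

lemma part2_mem {Ω : Set (Euc 3)} (hΩo : IsOpen Ω) (hΩb : Bornology.IsBounded Ω)
    (hΩ : Convex ℝ Ω) (hne : Ω.Nonempty) {d V κ : ℝ} (hd : d = Metric.diam Ω) (hd0 : 0 < d) (hd1 : d ≤ 1)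
    (hV : V = (volume Ω).toReal)
    {N : ℝ≥0∞} (hNt : N ≠ ⊤)
    (hN : ∀ x : Euc 3, ∫⁻ z in Metric.ball x 2, (‖z - x‖ₑ ^ (-((17:ℝ)/6))) ≤ N)
    (hκ : κ = d ^ ((17:ℝ)/8 + 1) * (2 / V) / (17/8 - 2) * N.toReal ^ ((3:ℝ)/4))
    (hκV : κ * V ^ ((1:ℝ)/4) ≤ 1/10) (U : SobFun 3 Ω 2) :
    LinfN Ω U.u ≤ ((2 : ℝ) ^ ((3:ℝ)/2) / Real.sqrt V) * SobNormInt U := by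
  haveI : IsFiniteMeasure (volume.restrict Ω) := ⟨by simpa using hΩb.measure_lt_top⟩
  have hfin : volume Ω ≠ ⊤ := hΩb.measure_lt_top.ne
  have hVpos : 0 < V := by
    rw [hV]; exact ENNReal.toReal_pos (hΩo.measure_pos volume hne).ne' hfin
  have hκ0 : 0 ≤ κ := by
    rw [hκ]
    have : (0:ℝ) < 17/8 - 2 := by norm_num
    positivity
  have hS := sobNorm_nonneg U
  have hsq := sobNorm_sq U
  set S := SobNormInt U
  set μ := volume.restrict Ω with hμ
  have hR : ∀ x ∈ Ω, ∀ y ∈ Ω, ‖x - y‖ ≤ d := by rw [hd]; exact diam_bd hΩb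
  have hN1 := riesz_sub (show d < 2 by linarith) hR hN
  have q0 : 0 ≤ L2N Ω U.u ^ 2 := sq_nonneg _
  have q1 : ∀ i, 0 ≤ L2N Ω (U.d1 i) ^ 2 := fun i => sq_nonneg _
  have q2 : ∀ i j, 0 ≤ L2N Ω (d2 U i j) ^ 2 := fun i j => sq_nonneg _
  have s1 : 0 ≤ ∑ i, L2N Ω (U.d1 i) ^ 2 := Finset.sum_nonneg fun i _ => q1 i
  have s2 : 0 ≤ ∑ i, ∑ j, L2N Ω (d2 U i j) ^ 2 :=
    Finset.sum_nonneg fun i _ => Finset.sum_nonneg fun j _ => q2 i j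
  have toE : ∀ f : Euc 3 → ℂ, MemLp f 2 μ → L2N Ω f ^ 2 ≤ S ^ 2 → eLpNorm f 2 μ ≤ ENNReal.ofReal S := by
    intro f hf h
    rw [← ENNReal.ofReal_toReal hf.2.ne]
    exact ENNReal.ofReal_le_ofReal (abs_le_of_sq_le_sq' h hS).2
  have b0 : eLpNorm U.u 2 μ ≤ ENNReal.ofReal S := toE _ (mem0 U) (by linarith)
  have b1 : ∀ i, eLpNorm (U.d1 i) 2 μ ≤ ENNReal.ofReal S := fun i => toE _ (mem1 U i) (by
    have := Finset.single_le_sum (f := fun i => L2N Ω (U.d1 i) ^ 2) (fun i _ => q1 i) (Finset.mem_univ i)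
    linarith)
  have b2 : ∀ i j, eLpNorm (d2 U i j) 2 μ ≤ ENNReal.ofReal S := fun i j => toE _ (mem2 U i j) (by
    have h1 := Finset.single_le_sum (f := fun i => ∑ j, L2N Ω (d2 U i j) ^ 2)
      (fun i _ => Finset.sum_nonneg fun j _ => q2 i j) (Finset.mem_univ i)
    have h2 := Finset.single_le_sum (f := fun j => L2N Ω (d2 U i j) ^ 2)
      (fun j _ => q2 i j) (Finset.mem_univ j)
    linarith)
  have hcN : ENNReal.ofReal (d ^ ((17:ℝ)/8 + 1) * (2 / (volume Ω).toReal) / (17/8 - 2)) * N ^ ((3:ℝ)/4)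
      = ENNReal.ofReal κ := by
    rw [hκ, ENNReal.ofReal_mul' (by positivity), ← ENNReal.ofReal_rpow_of_nonneg ENNReal.toReal_nonneg (by norm_num),
      ENNReal.ofReal_toReal hNt, hV]
  have hVw : volume Ω ^ ((1:ℝ)/4) = ENNReal.ofReal (V ^ ((1:ℝ)/4)) := by
    rw [hV, ← ENNReal.ofReal_rpow_of_nonneg ENNReal.toReal_nonneg (by norm_num), ENNReal.ofReal_toReal hfin]
  obtain ⟨T, hT⟩ : ∃ T, T = Real.sqrt (2 / V) * S * V ^ ((1:ℝ)/4) + κ * (3 * S) := ⟨_, rfl⟩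
  have hT0 : 0 ≤ T := by rw [hT]; positivity
  have c1 : ∀ i, eLpNorm (U.d1 i) (ENNReal.ofReal 4) μ ≤ ENNReal.ofReal T := by
    intro i
    obtain ⟨m, hm, hpt⟩ := sob_pt hΩo hΩb hΩ hne (β := 17/8) (by norm_num) hR hd0 (mem1 U i)
      (fun j => (mem2 U i j).integrable (by norm_num)) (weak12 U i)
    have h := Lp_est (p := 4) (N := N) (by norm_num) hΩo (mem1 U i).1 (fun j => (mem2 U i j).1) hpt
      (by
        rw [show (17/8 / (1/2 + 1/4) : ℝ) = 17/6 by norm_num]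
        exact hN1)
    rw [show ((1:ℝ)/2 + 1/4) = 3/4 by norm_num, hcN, hVw] at h
    refine h.trans ?_
    rw [hT, ENNReal.ofReal_add (by positivity) (by positivity)]
    gcongr
    · rw [ENNReal.ofReal_mul (by positivity), ENNReal.ofReal_mul (by positivity)]
      gcongr
      refine hm.trans ?_
      rw [hV]
      gcongr
      exact b1 i
    · rw [ENNReal.ofReal_mul hκ0]
      gcongr
      calc _ ≤ ∑ j : Fin 3, ENNReal.ofReal S := Finset.sum_le_sum fun j _ => b2 i j
        _ = ENNReal.ofReal (3 * S) := by
          rw [ENNReal.ofReal_mul (by norm_num)]; simp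
  obtain ⟨m, hm, hpt⟩ := sob_pt hΩo hΩb hΩ hne (β := 17/8) (by norm_num) hR hd0 (mem0 U)
      (fun j => (mem1 U j).integrable (by norm_num)) (weak01 U)
  have h := Linf_est (N := N) hΩo (fun j => (mem1 U j).1) hpt
      (by
        rw [show (17/8 * (4/3) : ℝ) = 17/6 by norm_num]
        exact hN1)
  rw [hcN] at h
  have h' : eLpNorm U.u ⊤ μ ≤ ENNReal.ofReal (Real.sqrt (2 / V) * S + κ * (3 * T)) := by
    refine h.trans ?_
    rw [ENNReal.ofReal_add (by positivity) (by positivity)]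
    gcongr
    · rw [ENNReal.ofReal_mul (by positivity)]
      refine hm.trans ?_
      rw [hV]
      gcongr
    · rw [ENNReal.ofReal_mul hκ0]
      gcongr
      calc _ ≤ ∑ j : Fin 3, ENNReal.ofReal T := Finset.sum_le_sum fun j _ => c1 j
        _ = ENNReal.ofReal (3 * T) := by
          rw [ENNReal.ofReal_mul (by norm_num)]; simp
  have h3 := ENNReal.toReal_le_of_le_ofReal (by positivity) h'
  rw [hT] at h3
  exact h3.trans (part2_arith hVpos hκ0 hS hκV)

lemma part2 (C : ℝ) (hC : 0 < C) : ∃ d₀ : ℝ, 0 < d₀ ∧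
      ∀ Ω' : Set (Euc 3), IsOpen Ω' → Bornology.IsBounded Ω' → Convex ℝ Ω' →
        Ω'.Nonempty → (volume Ω').toReal = C * (Metric.diam Ω')^3 →
        Metric.diam Ω' ≤ d₀ →
          1 / Real.sqrt ((volume Ω').toReal) ≤ CS2 Ω' ∧
          CS2 Ω' ≤ (2 : ℝ) ^ ((3:ℝ)/2) / Real.sqrt ((volume Ω').toReal) := by
  obtain ⟨N, hNt, hN⟩ := riesz_int (17/6) (by norm_num) 2
  obtain ⟨M, hM⟩ : ∃ M, M = 16 / C * N.toReal ^ ((3:ℝ)/4) * C ^ ((1:ℝ)/4) := ⟨_, rfl⟩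
  have hM0 : 0 ≤ M := by rw [hM]; positivity
  refine ⟨min 1 ((1 / (10 * (M + 1))) ^ ((8:ℝ)/7)), by positivity, ?_⟩
  intro Ω hΩo hΩb hΩ hne hvol hdiam
  have hVpos : 0 < (volume Ω).toReal :=
    ENNReal.toReal_pos (hΩo.measure_pos volume hne).ne' hΩb.measure_lt_top.ne
  obtain ⟨d, hd⟩ : ∃ d, d = Metric.diam Ω := ⟨_, rfl⟩
  have hd0 : 0 < d := by
    rcases (Metric.diam_nonneg (s := Ω)).eq_or_lt with h | h
    · rw [← h] at hvol; rw [hvol] at hVpos; norm_num at hVpos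
    · rw [hd]; exact h
  rw [← hd] at hvol hdiam
  have hd1 := hdiam.trans (min_le_left _ _)
  have hd2 := hdiam.trans (min_le_right _ _)
  refine lower_bd hΩo hΩb hne (by positivity)
    (part2_mem hΩo hΩb hΩ hne hd hd0 hd1 rfl hNt hN rfl ?_)
  rw [hvol]
  have e : d ^ ((17:ℝ)/8 + 1) * (2 / (C * d ^ 3)) / (17/8 - 2) * N.toReal ^ ((3:ℝ)/4) * (C * d ^ 3) ^ ((1:ℝ)/4)
      = M * d ^ ((7:ℝ)/8) := by
    rw [Real.mul_rpow hC.le (by positivity), ← Real.rpow_natCast_mul hd0.le, hM]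
    have e1 : d ^ ((17:ℝ)/8 + 1) * d ^ (((3:ℕ):ℝ) * (1/4)) = d ^ ((7:ℝ)/8) * d ^ 3 := by
      rw [← Real.rpow_add hd0, ← Real.rpow_natCast, ← Real.rpow_add hd0]; norm_num
    calc _ = 16 / C * N.toReal ^ ((3:ℝ)/4) * C ^ ((1:ℝ)/4) * (d ^ ((17:ℝ)/8 + 1) * d ^ (((3:ℕ):ℝ) * (1/4)) / d ^ 3) := by
          field_simp; ring
      _ = _ := by rw [e1]; field_simp
  rw [e]
  have e2 : d ^ ((7:ℝ)/8) ≤ 1 / (10 * (M + 1)) := by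
    calc d ^ ((7:ℝ)/8) ≤ ((1 / (10 * (M + 1))) ^ ((8:ℝ)/7)) ^ ((7:ℝ)/8) := by gcongr
      _ = _ := by rw [← Real.rpow_mul (by positivity)]; norm_num
  calc M * d ^ ((7:ℝ)/8) ≤ M * (1 / (10 * (M + 1))) := by gcongr
    _ ≤ 1/10 := by
      rw [mul_one_div, div_le_div_iff₀ (by positivity) (by norm_num)]; linarith

/-- Lemma `sobolevestimate`: for Ω ⊂ ℝ³ bounded and convex and
p ∈ (3,6),
  |Ω|^{-1/2} ≤ C_S(2) ≤ 2^{1/p} C_{2,p} C_{p,∞},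
where C_{p,q} are any W^{1,p} → L^q embedding constants; and if |Ω| = C d_Ω³ then for
all sufficiently small diameters,  |Ω|^{-1/2} ≤ C_S(2) ≤ 2^{3/2} |Ω|^{-1/2}. -/
theorem npbe_CS2_bounds
    (Ω : Set (Euc 3)) (hΩo : IsOpen Ω) (hΩb : Bornology.IsBounded Ω)
    (hΩc : Convex ℝ Ω) (hne : Ω.Nonempty)
    (p : ℝ) (hp3 : 3 < p) (hp6 : p < 6)
    (C2p Cpinf : ℝ) (hC2p0 : 0 ≤ C2p) (hCpinf0 : 0 ≤ Cpinf)
    (hC2p : ∀ U : W1Fun 3 Ω 2, LpN Ω p U.u ≤ C2p * W1Fun.norm U)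
    (hCpinf : ∀ U : W1Fun 3 Ω p, LinfN Ω U.u ≤ Cpinf * W1Fun.norm U) :
    (1 / Real.sqrt ((volume Ω).toReal) ≤ CS2 Ω ∧
      CS2 Ω ≤ (2 : ℝ) ^ (1/p) * C2p * Cpinf) ∧
    (∀ C : ℝ, 0 < C → ∃ d₀ : ℝ, 0 < d₀ ∧
      ∀ Ω' : Set (Euc 3), IsOpen Ω' → Bornology.IsBounded Ω' → Convex ℝ Ω' →
        Ω'.Nonempty → (volume Ω').toReal = C * (Metric.diam Ω')^3 →
        Metric.diam Ω' ≤ d₀ →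
          1 / Real.sqrt ((volume Ω').toReal) ≤ CS2 Ω' ∧
          CS2 Ω' ≤ (2 : ℝ) ^ ((3:ℝ)/2) / Real.sqrt ((volume Ω').toReal)) := by
  exact ⟨lower_bd hΩo hΩb hne (by positivity)
    (part1_mem hΩo hΩb hΩc hne p hp3 hp6 C2p Cpinf hC2p0 hCpinf0 hC2p hCpinf), part2⟩
end
end
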